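/- arXiv:1908.04049 — 2 statements merged into one kernel-verified Lean document; each statement's English description precedes it below -/
import Mathlib

section
/- There exists an absolute constant C > 0 such that for all real α, β with α ≥ β ≥ (1+√2)/4, all integers n ≥ 6 and all x ∈ [−1,1], ((1−x)/2)^{α/2+1/4} ((1+x)/2)^{β/2+1/4} |P_n^{(α,β)}(x)| ≤ C α^{1/6} (1 + α/n)^{1/12} ( Γ(n+α+1) Γ(n+β+1) / ( (2n+α+β+1) Γ(n+1) Γ(n+α+β+1) ) )^{1/2}, where Γ is the Gamma function. -/
/-- Generalized binomial coefficient `C(t, j) = t(t-1)⋯(t-j+1)/j!`. -/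
noncomputable def genChoose (t : ℝ) (j : ℕ) : ℝ :=
  (∏ i ∈ Finset.range j, (t - (i : ℝ))) / (Nat.factorial j : ℝ)

/-- Jacobi polynomial
`P_n^{(α,β)}(x) = ∑_{s=0}^n C(n+α, n-s) C(n+β, s) ((x-1)/2)^s ((x+1)/2)^{n-s}`. -/
noncomputable def jacobi (α β : ℝ) (n : ℕ) (x : ℝ) : ℝ :=
  ∑ s ∈ Finset.range (n + 1),
    genChoose ((n : ℝ) + α) (n - s) * genChoose ((n : ℝ) + β) s *
      ((x - 1) / 2) ^ s * ((x + 1) / 2) ^ (n - s)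

/-!
In the variable `t = (1 - x) / 2 = sin² (θ / 2)`, the weighted polynomial `v` solves
`d²v/dθ² + R / (t * (1 - t)) * v = 0`, where `R` is a quadratic polynomial in `t` with two zeros
`t₁ < t₁ + 2 * w` in `(0, 1)`, and the Gamma quotient in the bound is the integral of `v ^ 2`
with respect to `θ`. Where `R` is negative, `v * dv/dθ` is monotone, so `|v|` has no maximum there.
In between, each multiplier `κ` yields a quadratic form in `(v, dv/dθ)` whose derivative is `v ^ 2`
times a third-order differential expression in `κ`. The multiplier `(t - t₁) ^ 3` bounds the energy
at the midpoint by the integral of `v ^ 2`, and `1 / √(t - t₁ + ε)` transports this bound to the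
distance `ε` from the turning point. With `ε` the width of the Airy region, Grönwall's inequality
loses only a constant factor on the remaining stretch; the reflection `t ↦ 1 - t` covers the other
half of the interval. For bounded `n` the estimate `R ≤ (n + 1) * (n + α + β) * t * (1 - t)`
already suffices.
-/

open Set Finset.HasAntidiagonal

theorem succ_mul_genChoose_succ (t : ℝ) (j : ℕ) :
    ((j : ℝ) + 1) * genChoose t (j + 1) = (t - j) * genChoose t j := by
  unfold genChoose
  rw [Finset.prod_range_succ, Nat.factorial_succ]
  have : (Nat.factorial j : ℝ) ≠ 0 := by positivity
  have : (j : ℝ) + 1 ≠ 0 := by positivity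
  push_cast
  field_simp

/-- The coefficient of `(-t) ^ s * (1 - t) ^ m` in the Jacobi polynomial of degree `s + m`
in the variable `t = (1 - x) / 2`. -/
noncomputable def unitJacobiCoeff (a b : ℝ) (s m : ℕ) : ℝ :=
  genChoose (s + m + a) m * genChoose (s + m + b) s

/-- The Jacobi polynomial transplanted to the unit interval, in the variable `t = (1 - x) / 2`. -/
noncomputable def unitJacobi (a b : ℝ) (n : ℕ) (t : ℝ) : ℝ :=
  ∑ p ∈ antidiagonal n, unitJacobiCoeff a b p.1 p.2 * ((-t) ^ p.1 * (1 - t) ^ p.2)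

theorem jacobi_eq_unitJacobi (a b : ℝ) (n : ℕ) (x : ℝ) :
    jacobi a b n x = unitJacobi a b n ((1 - x) / 2) := by
  unfold jacobi unitJacobi unitJacobiCoeff
  rw [Finset.Nat.sum_antidiagonal_eq_sum_range_succ_mk]
  refine Finset.sum_congr rfl fun s hs => ?_
  have hn : (s : ℝ) + (n - s : ℕ) = n := by
    rw [← Nat.cast_add, Nat.add_sub_cancel' (Finset.mem_range_succ_iff.1 hs)]
  rw [hn]
  ring

theorem succ_mul_unitJacobiCoeff_succ_left (a b : ℝ) (s m : ℕ) :
    ((s : ℝ) + 1) * unitJacobiCoeff a b (s + 1) m =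
      (m + b + 1) * unitJacobiCoeff (a + 1) (b + 1) s m := by
  unfold unitJacobiCoeff
  have h := succ_mul_genChoose_succ (s + m + (b + 1)) s
  push_cast
  rw [show (s : ℝ) + 1 + m + a = s + m + (a + 1) by ring,
    show (s : ℝ) + 1 + m + b = s + m + (b + 1) by ring]
  linear_combination genChoose (s + m + (a + 1)) m * h

theorem succ_mul_unitJacobiCoeff_succ_right (a b : ℝ) (s m : ℕ) :
    ((m : ℝ) + 1) * unitJacobiCoeff a b s (m + 1) =
      (s + a + 1) * unitJacobiCoeff (a + 1) (b + 1) s m := by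
  unfold unitJacobiCoeff
  have h := succ_mul_genChoose_succ (s + m + (a + 1)) m
  push_cast
  rw [show (s : ℝ) + (m + 1) + a = s + m + (a + 1) by ring,
    show (s : ℝ) + (m + 1) + b = s + m + (b + 1) by ring]
  linear_combination genChoose (s + m + (b + 1)) s * h

theorem hasDerivAt_neg_pow_mul_one_sub_pow (s m : ℕ) (t : ℝ) :
    HasDerivAt (fun t : ℝ => (-t) ^ s * (1 - t) ^ m)
      (-(s * (-t) ^ (s - 1) * (1 - t) ^ m) - m * (-t) ^ s * (1 - t) ^ (m - 1)) t := by
  have hs := (hasDerivAt_neg t).fun_pow s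
  have hm := ((hasDerivAt_id' t).const_sub 1).fun_pow m
  exact (hs.fun_mul hm).congr_deriv (by ring)

theorem hasDerivAt_unitJacobi_succ (a b : ℝ) (n : ℕ) (t : ℝ) :
    HasDerivAt (unitJacobi a b (n + 1))
      (-(n + a + b + 2) * unitJacobi (a + 1) (b + 1) n t) t := by
  have h : HasDerivAt (unitJacobi a b (n + 1)) _ t := HasDerivAt.fun_sum fun p _ =>
    (hasDerivAt_neg_pow_mul_one_sub_pow p.1 p.2 t).const_mul (unitJacobiCoeff a b p.1 p.2)
  refine h.congr_deriv ?_
  simp only [mul_sub, Finset.sum_sub_distrib]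
  rw [Finset.Nat.sum_antidiagonal_succ, Finset.Nat.sum_antidiagonal_succ']
  simp only [Nat.cast_zero, zero_mul, neg_zero, mul_zero, zero_add, Nat.add_sub_cancel]
  rw [← Finset.sum_sub_distrib, unitJacobi, Finset.mul_sum]
  refine Finset.sum_congr rfl fun ⟨s, m⟩ hp => ?_
  have hn : (n : ℝ) = s + m := by exact_mod_cast (mem_antidiagonal.1 hp).symm
  have hs := succ_mul_unitJacobiCoeff_succ_left a b s m
  have hm := succ_mul_unitJacobiCoeff_succ_right a b s m
  push_cast
  rw [hn]
  linear_combination (-((-t) ^ s * (1 - t) ^ m)) * (hs + hm)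

theorem differentiable_unitJacobi (a b : ℝ) (n : ℕ) : Differentiable ℝ (unitJacobi a b n) := by
  unfold unitJacobi
  fun_prop

theorem differentiable_deriv_unitJacobi (a b : ℝ) (n : ℕ) :
    Differentiable ℝ (deriv (unitJacobi a b n)) := by
  refine ContDiff.differentiable_deriv_two ?_
  unfold unitJacobi
  fun_prop

theorem mul_deriv_unitJacobi (a b : ℝ) (n : ℕ) (t : ℝ) :
    t * (1 - t) * deriv (unitJacobi a b n) t =
      ∑ p ∈ antidiagonal n, unitJacobiCoeff a b p.1 p.2 *
        ((p.1 * (1 - t) - p.2 * t) * ((-t) ^ p.1 * (1 - t) ^ p.2)) := by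
  have h : HasDerivAt (unitJacobi a b n) _ t := HasDerivAt.fun_sum fun p _ =>
    (hasDerivAt_neg_pow_mul_one_sub_pow p.1 p.2 t).const_mul (unitJacobiCoeff a b p.1 p.2)
  have cancel : ∀ (x : ℝ) (k : ℕ), x * (k * x ^ (k - 1)) = k * x ^ k := by
    rintro x (_ | k)
    · simp
    · simp only [Nat.add_sub_cancel]
      ring
  rw [h.deriv, Finset.mul_sum]
  refine Finset.sum_congr rfl fun ⟨s, m⟩ _ => ?_
  linear_combination unitJacobiCoeff a b s m * ((1 - t) * (1 - t) ^ m * cancel (-t) s -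
    t * (-t) ^ s * cancel (1 - t) m)

theorem mul_deriv_unitJacobi_add (a b : ℝ) (n : ℕ) (t : ℝ) :
    t * (1 - t) * deriv (unitJacobi (a + 1) (b + 1) n) t +
        ((a + 1) * (1 - t) - (b + 1) * t) * unitJacobi (a + 1) (b + 1) n t =
      (n + 1) * unitJacobi a b (n + 1) t := by
  have euler : (n + 1) * unitJacobi a b (n + 1) t =
      ∑ p ∈ antidiagonal (n + 1),
          p.1 * (unitJacobiCoeff a b p.1 p.2 * ((-t) ^ p.1 * (1 - t) ^ p.2)) +
        ∑ p ∈ antidiagonal (n + 1),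
          p.2 * (unitJacobiCoeff a b p.1 p.2 * ((-t) ^ p.1 * (1 - t) ^ p.2)) := by
    rw [← Finset.sum_add_distrib, unitJacobi, Finset.mul_sum]
    refine Finset.sum_congr rfl fun ⟨s, m⟩ hp => ?_
    have hn : (n : ℝ) + 1 = s + m := by exact_mod_cast (mem_antidiagonal.1 hp).symm
    rw [hn, add_mul]
  rw [euler, Finset.Nat.sum_antidiagonal_succ, Finset.Nat.sum_antidiagonal_succ',
    mul_deriv_unitJacobi, unitJacobi, Finset.mul_sum]
  simp only [Nat.cast_zero, zero_mul, zero_add]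
  rw [← Finset.sum_add_distrib, ← Finset.sum_add_distrib]
  refine Finset.sum_congr rfl fun ⟨s, m⟩ _ => ?_
  have hs := succ_mul_unitJacobiCoeff_succ_left a b s m
  have hm := succ_mul_unitJacobiCoeff_succ_right a b s m
  push_cast
  linear_combination (-((-t) ^ s * (1 - t) ^ m)) * (-t * hs + (1 - t) * hm)

theorem unitJacobi_differential_equation (a b : ℝ) (n : ℕ) (t : ℝ) :
    t * (1 - t) * deriv (deriv (unitJacobi a b n)) t +
        ((a + 1) * (1 - t) - (b + 1) * t) * deriv (unitJacobi a b n) t =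
      -(n * (n + a + b + 1) * unitJacobi a b n t) := by
  cases n with
  | zero =>
    have h : unitJacobi a b 0 = fun _ => unitJacobiCoeff a b 0 0 := by
      funext t
      simp [unitJacobi]
    simp [h]
  | succ n =>
    have h : deriv (unitJacobi a b (n + 1)) =
        fun t => -(n + a + b + 2) * unitJacobi (a + 1) (b + 1) n t :=
      funext fun t => (hasDerivAt_unitJacobi_succ a b n t).deriv
    have hraise := mul_deriv_unitJacobi_add a b n t
    rw [h, deriv_const_mul _ (differentiable_unitJacobi _ _ _ _)]
    push_cast
    linear_combination (-(n + a + b + 2)) * hraise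

/-- The Jacobi weight `t ^ a * (1 - t) ^ b` on the unit interval. -/
noncomputable def jacobiWeight (a b t : ℝ) : ℝ := t ^ a * (1 - t) ^ b

theorem continuous_jacobiWeight {a b : ℝ} (ha : 0 ≤ a) (hb : 0 ≤ b) :
    Continuous (jacobiWeight a b) :=
  (Real.continuous_rpow_const ha).mul
    ((Real.continuous_rpow_const hb).comp (continuous_const.sub continuous_id))

theorem jacobiWeight_zero {a : ℝ} (ha : a ≠ 0) (b : ℝ) : jacobiWeight a b 0 = 0 := by
  rw [jacobiWeight, Real.zero_rpow ha, zero_mul]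

theorem jacobiWeight_one (a : ℝ) {b : ℝ} (hb : b ≠ 0) : jacobiWeight a b 1 = 0 := by
  rw [jacobiWeight, sub_self, Real.zero_rpow hb, mul_zero]

theorem jacobiWeight_add_one {t : ℝ} (ht : t ∈ Ioo 0 1) (a b : ℝ) :
    jacobiWeight (a + 1) (b + 1) t = t * (1 - t) * jacobiWeight a b t := by
  rw [jacobiWeight, jacobiWeight, Real.rpow_add_one ht.1.ne',
    Real.rpow_add_one (sub_pos.2 ht.2).ne']
  ring

theorem hasDerivAt_jacobiWeight (a b : ℝ) {t : ℝ} (ht : t ∈ Ioo 0 1) :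
    HasDerivAt (jacobiWeight a b)
      (jacobiWeight a b t * (a * (1 - t) - b * t) / (t * (1 - t))) t := by
  have ht' : 0 < 1 - t := sub_pos.2 ht.2
  have hl := Real.hasDerivAt_rpow_const (x := t) (p := a) (Or.inl ht.1.ne')
  have hr := ((hasDerivAt_id' t).const_sub 1).rpow_const (p := b) (Or.inl ht'.ne')
  refine (hl.mul hr).congr_deriv ?_
  have := ht.1.ne'
  rw [Real.rpow_sub_one ht.1.ne', Real.rpow_sub_one ht'.ne', jacobiWeight]
  field_simp
  ring

theorem integral_jacobiWeight {a b : ℝ} (ha : -1 < a) (hb : -1 < b) :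
    ∫ t in (0 : ℝ)..1, jacobiWeight a b t = ProbabilityTheory.beta (a + 1) (b + 1) := by
  rw [ProbabilityTheory.beta_eq_betaIntegralReal _ _ (by linarith) (by linarith),
    Complex.betaIntegral]
  have hcast : ∀ t ∈ uIcc (0 : ℝ) 1,
      ((t : ℂ) ^ (((a + 1 : ℝ) : ℂ) - 1) * (1 - (t : ℂ)) ^ (((b + 1 : ℝ) : ℂ) - 1)) =
        (jacobiWeight a b t : ℂ) := by
    intro t ht
    rw [uIcc_of_le zero_le_one] at ht
    rw [jacobiWeight, Complex.ofReal_mul, Complex.ofReal_cpow ht.1,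
      Complex.ofReal_cpow (by linarith [ht.2])]
    simp
  rw [intervalIntegral.integral_congr hcast, intervalIntegral.integral_ofReal, Complex.ofReal_re]

open Real in
/-- The squared norm of the Jacobi polynomial with respect to `t ^ a * (1 - t) ^ b` on `[0, 1]`. -/
noncomputable def unitJacobiNormSq (a b : ℝ) (n : ℕ) : ℝ :=
  Gamma ((n : ℝ) + a + 1) * Gamma ((n : ℝ) + b + 1) /
    ((2 * (n : ℝ) + a + b + 1) * Gamma ((n : ℝ) + 1) * Gamma ((n : ℝ) + a + b + 1))

theorem unitJacobiNormSq_nonneg {a b : ℝ} (ha : 0 ≤ a) (hb : 0 ≤ b) (n : ℕ) :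
    0 ≤ unitJacobiNormSq a b n := by
  have hΓ : ∀ {x : ℝ}, 0 ≤ x → 0 ≤ Real.Gamma x := Real.Gamma_nonneg_of_nonneg
  unfold unitJacobiNormSq
  have := hΓ (show 0 ≤ (n : ℝ) + a + 1 by positivity)
  have := hΓ (show 0 ≤ (n : ℝ) + b + 1 by positivity)
  have := hΓ (show 0 ≤ (n : ℝ) + 1 by positivity)
  have := hΓ (show 0 ≤ (n : ℝ) + a + b + 1 by positivity)
  positivity

theorem unitJacobiNormSq_zero {a b : ℝ} (hab : a + b + 1 ≠ 0) :
    unitJacobiNormSq a b 0 = ProbabilityTheory.beta (a + 1) (b + 1) := by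
  unfold unitJacobiNormSq ProbabilityTheory.beta
  rw [show a + 1 + (b + 1) = a + b + 1 + 1 by ring, Real.Gamma_add_one hab]
  simp

theorem succ_mul_unitJacobiNormSq_succ {a b : ℝ} (ha : 0 ≤ a) (hb : 0 ≤ b) (n : ℕ) :
    ((n : ℝ) + 1) * unitJacobiNormSq a b (n + 1) =
      ((n : ℝ) + a + b + 2) * unitJacobiNormSq (a + 1) (b + 1) n := by
  have hn := Real.Gamma_add_one (show (n : ℝ) + 1 ≠ 0 by positivity)
  have hnab := Real.Gamma_add_one (show (n : ℝ) + a + b + 2 ≠ 0 by positivity)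
  unfold unitJacobiNormSq
  push_cast
  rw [show (n : ℝ) + 1 + a + 1 = n + a + 2 by ring, show (n : ℝ) + 1 + b + 1 = n + b + 2 by ring,
    show (n : ℝ) + (a + 1) + 1 = n + a + 2 by ring,
    show (n : ℝ) + (b + 1) + 1 = n + b + 2 by ring,
    show (n : ℝ) + 1 + a + b + 1 = n + a + b + 2 by ring,
    show (n : ℝ) + (a + 1) + (b + 1) + 1 = n + a + b + 2 + 1 by ring, hn, hnab,
    show 2 * ((n : ℝ) + 1) + a + b + 1 = 2 * n + a + b + 3 by ring,
    show 2 * (n : ℝ) + (a + 1) + (b + 1) + 1 = 2 * n + a + b + 3 by ring]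
  field_simp

theorem continuous_jacobiWeight_mul_sq {a b : ℝ} (ha : 0 ≤ a) (hb : 0 ≤ b) (n : ℕ) :
    Continuous fun t => jacobiWeight a b t * unitJacobi a b n t ^ 2 :=
  (continuous_jacobiWeight ha hb).mul ((differentiable_unitJacobi a b n).continuous.pow 2)

theorem succ_mul_integral_unitJacobi_sq_succ {a b : ℝ} (ha : 0 ≤ a) (hb : 0 ≤ b) (n : ℕ) :
    (n + 1) * ∫ t in (0 : ℝ)..1, jacobiWeight a b t * unitJacobi a b (n + 1) t ^ 2 =
      (n + a + b + 2) *
        ∫ t in (0 : ℝ)..1, jacobiWeight (a + 1) (b + 1) t * unitJacobi (a + 1) (b + 1) n t ^ 2 := by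
  have ha' : 0 ≤ a + 1 := by linarith
  have hb' : 0 ≤ b + 1 := by linarith
  have hcont := (continuous_jacobiWeight ha' hb').mul
    ((differentiable_unitJacobi (a + 1) (b + 1) n).continuous.mul
      (differentiable_unitJacobi a b (n + 1)).continuous)
  have hup := (continuous_jacobiWeight_mul_sq ha hb (n + 1)).const_mul (n + 1 : ℝ)
  have hlow := (continuous_jacobiWeight_mul_sq ha' hb' n).const_mul (n + a + b + 2)
  have hdiff := (hup.sub hlow).intervalIntegrable (μ := MeasureTheory.volume) 0 1
  simp only [Pi.sub_def] at hdiff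
  rw [← intervalIntegral.integral_const_mul, ← intervalIntegral.integral_const_mul, ← sub_eq_zero,
    ← intervalIntegral.integral_sub (hup.intervalIntegrable _ _) (hlow.intervalIntegrable _ _),
    intervalIntegral.integral_eq_sub_of_hasDerivAt_of_le zero_le_one hcont.continuousOn _ hdiff]
  · simp [jacobiWeight_zero (show a + 1 ≠ 0 by linarith),
      jacobiWeight_one _ (show b + 1 ≠ 0 by linarith)]
  · intro t ht
    refine ((hasDerivAt_jacobiWeight (a + 1) (b + 1) ht).mul
      ((differentiable_unitJacobi (a + 1) (b + 1) n t).hasDerivAt.mul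
        (hasDerivAt_unitJacobi_succ a b n t))).congr_deriv ?_
    have hraise := mul_deriv_unitJacobi_add a b n t
    have := ht.1.ne'
    have := (sub_pos.2 ht.2).ne'
    simp only [Pi.mul_apply]
    rw [jacobiWeight_add_one ht]
    field_simp
    linear_combination jacobiWeight a b t * unitJacobi a b (n + 1) t * hraise

theorem integral_unitJacobi_sq {a b : ℝ} (ha : 0 ≤ a) (hb : 0 ≤ b) (n : ℕ) :
    ∫ t in (0 : ℝ)..1, jacobiWeight a b t * unitJacobi a b n t ^ 2 = unitJacobiNormSq a b n := by
  induction n generalizing a b with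
  | zero =>
    rw [unitJacobiNormSq_zero (by positivity),
      ← integral_jacobiWeight (by linarith) (by linarith)]
    simp [unitJacobi, unitJacobiCoeff, genChoose]
  | succ n ih =>
    refine mul_left_cancel₀ (show (n : ℝ) + 1 ≠ 0 by positivity) ?_
    rw [succ_mul_integral_unitJacobi_sq_succ ha hb, ih (by linarith) (by linarith),
      succ_mul_unitJacobiNormSq_succ ha hb]

/-- The Liouville normal form `d²v/dθ² + R / (t * (1 - t)) * v = 0`, where `t = sin² (θ / 2)`, as a
first-order system in `t`: the flux `y` stands for `t * (1 - t) * dv/dt`, and `v` vanishes at both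
endpoints and is square integrable with respect to `θ`. -/
structure IsLiouvilleSolution (R v y : ℝ → ℝ) : Prop where
  continuousOn : ContinuousOn v (Icc 0 1)
  map_zero : v 0 = 0
  map_one : v 1 = 0
  hasDerivAt : ∀ t ∈ Ioo 0 1, HasDerivAt v (y t / (t * (1 - t))) t
  hasDerivAt_flux : ∀ t ∈ Ioo 0 1,
    HasDerivAt y (((1 - 2 * t) / 2 * y t - R t * v t) / (t * (1 - t))) t
  intervalIntegrable :
    IntervalIntegrable (fun t => v t ^ 2 / √(t * (1 - t))) MeasureTheory.volume 0 1

/-- The integral of `v ^ 2` with respect to `θ`, where `t = sin² (θ / 2)`. -/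
noncomputable def liouvilleMass (v : ℝ → ℝ) : ℝ := ∫ t in (0 : ℝ)..1, v t ^ 2 / √(t * (1 - t))

/-- The quadratic form in `(Y, V) = (y t, v t)` whose quotient by `√(t * (1 - t))` is the
antiderivative furnished by a multiplier with value `κ` and derivatives `κ'`, `κ''` at `t`; see
`IsLiouvilleSolution.hasDerivAt_virialQuad_div_sqrt`. -/
noncomputable def virialQuad (R t κ κ' κ'' Y V : ℝ) : ℝ :=
  2 * κ * Y ^ 2 + 2 * κ * R * V ^ 2 - 2 * (t * (1 - t) * κ' + (1 - 2 * t) / 2 * κ) * Y * V +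
    t * (1 - t) * (t * (1 - t) * κ'' + 3 / 2 * (1 - 2 * t) * κ' - κ) * V ^ 2

/-- The adjoint of the third-order operator annihilating `v ^ 2`, applied to a multiplier with
derivatives `κ`, `κ'`, `κ''`, `κ'''` at `t`. -/
noncomputable def virialOp (R R' t κ κ' κ'' κ''' : ℝ) : ℝ :=
  (t * (1 - t)) ^ 2 * κ''' + 3 * (t * (1 - t)) * (1 - 2 * t) * κ'' +
    (3 / 4 - 7 * (t * (1 - t))) * κ' - (1 - 2 * t) * κ / 2 + 4 * R * κ' + 2 * R' * κ

theorem mul_one_sub_pos {t : ℝ} (ht : t ∈ Ioo 0 1) : 0 < t * (1 - t) :=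
  mul_pos ht.1 (sub_pos.2 ht.2)

theorem hasDerivAt_sqrt_mul_one_sub {t : ℝ} (ht : t ∈ Ioo 0 1) :
    HasDerivAt (fun t => √(t * (1 - t))) ((1 - 2 * t) / (2 * √(t * (1 - t)))) t := by
  have h := ((hasDerivAt_id' t).fun_mul ((hasDerivAt_id' t).const_sub 1)).sqrt
    (mul_one_sub_pos ht).ne'
  exact h.congr_deriv (by ring)

theorem le_exp_mul_of_neg_mul_le_deriv {e e' : ℝ → ℝ} {a b l : ℝ} (hab : a ≤ b)
    (he : ∀ t ∈ Icc a b, HasDerivAt e (e' t) t) (hl : ∀ t ∈ Ioo a b, -(l * e t) ≤ e' t) :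
    e a ≤ Real.exp (l * (b - a)) * e b := by
  have hderiv : ∀ t ∈ Icc a b, HasDerivAt (fun t => Real.exp (l * (t - a)) * e t)
      (Real.exp (l * (t - a)) * (l * e t + e' t)) t := by
    intro t ht
    have hexp := (((hasDerivAt_id' t).sub_const a).const_mul l).exp
    exact (hexp.fun_mul (he t ht)).congr_deriv (by ring)
  have hmono : MonotoneOn (fun t => Real.exp (l * (t - a)) * e t) (Icc a b) := by
    refine monotoneOn_of_hasDerivWithinAt_nonneg (convex_Icc a b)
      (fun t ht => (hderiv t ht).continuousAt.continuousWithinAt)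
      (fun t ht => (hderiv t (interior_subset ht)).hasDerivWithinAt) fun t ht => ?_
    rw [interior_Icc] at ht
    exact mul_nonneg (Real.exp_nonneg _) (by linarith [hl t ht])
  simpa using hmono (left_mem_Icc.2 hab) (right_mem_Icc.2 hab) hab

theorem liouvilleMass_nonneg (v : ℝ → ℝ) : 0 ≤ liouvilleMass v :=
  intervalIntegral.integral_nonneg zero_le_one fun _ _ => by positivity

theorem liouvilleMass_reflect (v : ℝ → ℝ) :
    liouvilleMass (fun t => v (1 - t)) = liouvilleMass v := by
  have h := intervalIntegral.integral_comp_sub_left (a := 0) (b := 1)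
    (fun t => v t ^ 2 / √(t * (1 - t))) 1
  simp only [sub_sub_cancel, sub_self, sub_zero] at h
  unfold liouvilleMass
  rw [← h]
  simp only [mul_comm]

namespace IsLiouvilleSolution

variable {R v y : ℝ → ℝ}

theorem reflect (h : IsLiouvilleSolution R v y) :
    IsLiouvilleSolution (fun t => R (1 - t)) (fun t => v (1 - t)) (fun t => -y (1 - t)) where
  continuousOn := h.continuousOn.comp (by fun_prop) fun t ht => by
    constructor <;> linarith [ht.1, ht.2]
  map_zero := by simpa using h.map_one
  map_one := by simpa using h.map_zero
  hasDerivAt t ht := by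
    have hv := h.hasDerivAt (1 - t) ⟨by linarith [ht.2], by linarith [ht.1]⟩
    exact (hv.comp_const_sub 1 t).congr_deriv (by ring)
  hasDerivAt_flux t ht := by
    have hy := h.hasDerivAt_flux (1 - t) ⟨by linarith [ht.2], by linarith [ht.1]⟩
    exact (hy.comp_const_sub 1 t).neg.congr_deriv (by ring)
  intervalIntegrable := by
    have hint := (h.intervalIntegrable.comp_sub_left 1).symm
    simp only [sub_self, sub_zero, sub_sub_cancel] at hint
    simpa only [mul_comm] using hint

theorem sub_le_mul_mass (h : IsLiouvilleSolution R v y) {F F' : ℝ → ℝ} {a b K : ℝ}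
    (hab : a ≤ b) (hsub : Icc a b ⊆ Icc 0 1) (hK : 0 ≤ K)
    (hF : ∀ t ∈ Icc a b, HasDerivAt F (F' t) t)
    (hF' : ∀ t ∈ Ioo a b, F' t ≤ K * (v t ^ 2 / √(t * (1 - t)))) :
    F b - F a ≤ K * liouvilleMass v := by
  have hint : IntervalIntegrable (fun t => K * (v t ^ 2 / √(t * (1 - t))))
      MeasureTheory.volume 0 1 := h.intervalIntegrable.const_mul K
  have ha := hsub (left_mem_Icc.2 hab)
  have hb := hsub (right_mem_Icc.2 hab)
  calc F b - F a ≤ ∫ t in a..b, K * (v t ^ 2 / √(t * (1 - t))) :=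
        intervalIntegral.sub_le_integral_of_hasDeriv_right_of_le hab
          (fun t ht => (hF t ht).continuousAt.continuousWithinAt)
          (fun t ht => (hF t (Ioo_subset_Icc_self ht)).hasDerivWithinAt)
          ((intervalIntegrable_iff_integrableOn_Icc_of_le zero_le_one).1 hint |>.mono_set hsub) hF'
    _ ≤ ∫ t in (0 : ℝ)..1, K * (v t ^ 2 / √(t * (1 - t))) :=
        intervalIntegral.integral_mono_interval ha.1 hab hb.2
          (Filter.Eventually.of_forall fun t => by dsimp only [Pi.zero_apply]; positivity) hint
    _ = K * liouvilleMass v := intervalIntegral.integral_const_mul _ _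

theorem hasDerivAt_virialQuad_div_sqrt (h : IsLiouvilleSolution R v y) {κ κ' κ'' : ℝ → ℝ}
    {R' κ''' t : ℝ} (ht : t ∈ Ioo 0 1) (hR : HasDerivAt R R' t) (hκ : HasDerivAt κ (κ' t) t)
    (hκ' : HasDerivAt κ' (κ'' t) t) (hκ'' : HasDerivAt κ'' κ''' t) :
    HasDerivAt
      (fun t => virialQuad (R t) t (κ t) (κ' t) (κ'' t) (y t) (v t) / √(t * (1 - t)))
      (virialOp (R t) R' t (κ t) (κ' t) (κ'' t) κ''' * (v t ^ 2 / √(t * (1 - t)))) t := by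
  have hD := mul_one_sub_pos ht
  have hv := h.hasDerivAt t ht
  have hy := h.hasDerivAt_flux t ht
  have hid := hasDerivAt_id' t
  have hd : HasDerivAt (fun t : ℝ => t * (1 - t)) (1 - 2 * t) t :=
    (hid.fun_mul (hid.const_sub 1)).congr_deriv (by ring)
  have hc : HasDerivAt (fun t : ℝ => 1 - 2 * t) (-2) t :=
    ((hid.const_mul 2).const_sub 1).congr_deriv (by ring)
  have hYV := (((hd.fun_mul hκ').fun_add ((hc.div_const 2).fun_mul hκ)).const_mul 2).fun_mul hy
    |>.fun_mul hv
  have hVV := (hd.fun_mul (((hd.fun_mul hκ'').fun_add ((hc.const_mul (3 / 2)).fun_mul hκ')).fun_sub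
    hκ)).fun_mul (hv.fun_pow 2)
  have hY := (hκ.const_mul 2).fun_mul (hy.fun_pow 2)
  have hV := ((hκ.const_mul 2).fun_mul hR).fun_mul (hv.fun_pow 2)
  refine ((((hY.fun_add hV).fun_sub hYV).fun_add hVV).fun_div (hasDerivAt_sqrt_mul_one_sub ht)
    (Real.sqrt_pos.2 hD).ne').congr_deriv ?_
  have hc2 : (1 - 2 * t) ^ 2 = 1 - 4 * (t * (1 - t)) := by ring
  unfold virialOp
  obtain ⟨q, hq, hqD⟩ : ∃ q, 0 < q ∧ q ^ 2 = t * (1 - t) :=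
    ⟨_, Real.sqrt_pos.2 hD, Real.sq_sqrt hD.le⟩
  rw [← hqD] at hc2 ⊢
  rw [Real.sqrt_sq hq.le]
  generalize 1 - 2 * t = c at *
  field_simp
  linear_combination (12 * κ' t * q ^ 2 * v t ^ 2) * hc2

end IsLiouvilleSolution

/-- The potential of a Liouville equation with turning points `t₁` and `t₁ + 2 * w`. -/
noncomputable def edgePotential (N t₁ w t : ℝ) : ℝ := N ^ 2 * (t - t₁) * (t₁ + 2 * w - t)

/-- The turning points `t₁ < t₁ + 2 * w` lie inside the unit interval. -/
structure IsTurningInterval (t₁ w : ℝ) : Prop where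
  left_pos : 0 < t₁
  width_pos : 0 < w
  right_lt_one : t₁ + 2 * w < 1

/-- `ε` is a length scale, measured from the turning point `t₁`, beyond which solutions oscillate;
the smallest one is comparable to the width `(t₁ ^ 2 / (N ^ 2 * w)) ^ (1 / 3)` of the Airy region,
up to a factor `(1 - t₁) ^ (2 / 3)`. -/
structure IsEdgeScale (N t₁ w ε : ℝ) : Prop where
  pos : 0 < ε
  le_width : ε ≤ w
  eight_le : 8 ≤ N ^ 2 * w * ε
  sq_le : 4 * (t₁ * (1 - t₁)) ^ 2 ≤ N ^ 2 * w * ε * ε ^ 2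

theorem abs_one_sub_two_mul_le_one {t : ℝ} (ht : t ∈ Icc 0 1) : |1 - 2 * t| ≤ 1 :=
  abs_le.2 ⟨by linarith [ht.2], by linarith [ht.1]⟩

theorem quadratic_nonneg {a b c : ℝ} (ha : 0 < a) (h : b ^ 2 ≤ a * c) (x z : ℝ) :
    0 ≤ a * x ^ 2 - 2 * b * x * z + c * z ^ 2 := by
  have : 0 ≤ a * (a * x ^ 2 - 2 * b * x * z + c * z ^ 2) := by
    nlinarith [sq_nonneg (a * x - b * z), sq_nonneg z]
  exact nonneg_of_mul_nonneg_right this ha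

theorem hasDerivAt_edgePotential (N t₁ w t : ℝ) :
    HasDerivAt (edgePotential N t₁ w) (2 * N ^ 2 * (t₁ + w - t)) t := by
  have hl := ((hasDerivAt_id' t).sub_const t₁).const_mul (N ^ 2)
  exact (hl.fun_mul ((hasDerivAt_id' t).const_sub (t₁ + 2 * w))).congr_deriv (by ring)

theorem hasDerivAt_div_sqrt_pow (c d : ℝ) (m : ℕ) {t : ℝ} (ht : 0 < t - d) :
    HasDerivAt (fun t => c / √(t - d) ^ (m + 1)) (-(c * (m + 1) / 2) / √(t - d) ^ (m + 3)) t := by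
  have hs := Real.sqrt_pos.2 ht
  have h := (((hasDerivAt_id' t).sub_const d).sqrt ht.ne').fun_pow (m + 1)
  refine ((h.fun_inv (pow_pos hs _).ne').const_mul c).congr_deriv ?_
  push_cast
  field_simp
  ring

theorem cube_remainder_le {m c D s : ℝ} (hc : |c| ≤ 1) (hD0 : 0 ≤ D) (hD : D ≤ 3 * m)
    (hs0 : 0 ≤ s) (hsm : s ≤ 2 * m) (hs : s ≤ 1 / 2) :
    D ^ 2 * 6 + 3 * D * c * (6 * s) + (3 / 4 - 7 * D) * (3 * s ^ 2) - c * s ^ 3 / 2 ≤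
      172 * m ^ 2 := by
  obtain ⟨hc₁, hc₂⟩ := abs_le.1 hc
  have hDD : D ^ 2 ≤ 9 * m ^ 2 := by nlinarith
  have hDs : D * s ≤ 6 * m ^ 2 := by nlinarith
  have hss : s ^ 2 ≤ 4 * m ^ 2 := by nlinarith
  have hcDs : c * (D * s) ≤ D * s := mul_le_of_le_one_left (by positivity) hc₂
  have hcs : -(c * s ^ 3) ≤ s ^ 2 / 2 := by nlinarith [pow_nonneg hs0 2, pow_nonneg hs0 3]
  have hDss : 0 ≤ D * s ^ 2 := by positivity
  linarith

namespace IsTurningInterval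

variable {t₁ w : ℝ}

theorem reflect (h : IsTurningInterval t₁ w) : IsTurningInterval (1 - t₁ - 2 * w) w where
  left_pos := by linarith [h.right_lt_one]
  width_pos := h.width_pos
  right_lt_one := by linarith [h.left_pos]

theorem left_mem (h : IsTurningInterval t₁ w) : t₁ ∈ Ioo 0 1 :=
  ⟨h.left_pos, by linarith [h.width_pos, h.right_lt_one]⟩

theorem mid_mem (h : IsTurningInterval t₁ w) : t₁ + w ∈ Ioo 0 1 :=
  ⟨by linarith [h.width_pos, h.left_pos], by linarith [h.width_pos, h.right_lt_one]⟩

theorem width_le_two_mul_mid (h : IsTurningInterval t₁ w) :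
    w ≤ 2 * ((t₁ + w) * (1 - (t₁ + w))) := by
  have := h.left_pos
  have := h.width_pos
  have := h.right_lt_one
  rcases le_total (t₁ + w) (1 / 2) with _ | _ <;> nlinarith

theorem mul_one_sub_le_three_mul_mid (h : IsTurningInterval t₁ w) {t : ℝ}
    (ht : t ∈ Icc t₁ (t₁ + w)) : t * (1 - t) ≤ 3 * ((t₁ + w) * (1 - (t₁ + w))) := by
  nlinarith [h.left_pos, h.width_pos, h.right_lt_one, ht.1, ht.2]

theorem virialOp_cube_le (h : IsTurningInterval t₁ w) {N t : ℝ} (ht : t ∈ Icc t₁ (t₁ + w))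
    (hN : 172 * ((t₁ + w) * (1 - (t₁ + w))) ^ 2 ≤ N ^ 2 * w ^ 4) :
    virialOp (edgePotential N t₁ w t) (2 * N ^ 2 * (t₁ + w - t)) t
      ((t - t₁) ^ 3) (3 * (t - t₁) ^ 2) (6 * (t - t₁)) 6 ≤ 13 * N ^ 2 * w ^ 4 := by
  have hw := h.width_pos
  have htI : t ∈ Ioo 0 1 := ⟨h.left_pos.trans_le ht.1, ht.2.trans_lt h.mid_mem.2⟩
  have hlower := cube_remainder_le (abs_one_sub_two_mul_le_one (Ioo_subset_Icc_self htI))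
    (mul_one_sub_pos htI).le (h.mul_one_sub_le_three_mul_mid ht) (sub_nonneg.2 ht.1)
    (by linarith [ht.2, h.width_le_two_mul_mid]) (by linarith [ht.2, h.left_pos, h.right_lt_one])
  have hmain : (t - t₁) ^ 3 * (28 * w - 16 * (t - t₁)) ≤ 12 * w ^ 4 := by
    have hs0 : 0 ≤ t - t₁ := sub_nonneg.2 ht.1
    have hsw : 0 ≤ w - (t - t₁) := by linarith [ht.2]
    generalize t - t₁ = s at *
    have hfactor : 12 * w ^ 4 - s ^ 3 * (28 * w - 16 * s) =
        (w - s) * (12 * w ^ 2 * (w - s) + 24 * w * s * (w - s) + 16 * s ^ 2 * (w - s) +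
          20 * w * s ^ 2) := by
      ring
    have : 0 ≤ 12 * w ^ 4 - s ^ 3 * (28 * w - 16 * s) := by
      rw [hfactor]
      positivity
    linarith
  have hscaled := mul_le_mul_of_nonneg_left hmain (sq_nonneg N)
  unfold virialOp edgePotential
  linarith

theorem le_virialQuad_cube (h : IsTurningInterval t₁ w) {N : ℝ} (Y V : ℝ)
    (hN : 172 * ((t₁ + w) * (1 - (t₁ + w))) ^ 2 ≤ N ^ 2 * w ^ 4) :
    w ^ 3 * (Y ^ 2 + N ^ 2 * w ^ 2 * V ^ 2) ≤
      virialQuad (N ^ 2 * w ^ 2) (t₁ + w) (w ^ 3) (3 * w ^ 2) (6 * w) Y V := by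
  have hw := h.width_pos
  have hm := h.width_le_two_mul_mid
  have hw1 : w ≤ 1 / 2 := by linarith [h.left_pos, h.right_lt_one]
  obtain ⟨hc₁, hc₂⟩ := abs_le.1 (abs_one_sub_two_mul_le_one (Ioo_subset_Icc_self h.mid_mem))
  unfold virialQuad
  generalize (t₁ + w) * (1 - (t₁ + w)) = m at *
  generalize 1 - 2 * (t₁ + w) = c at *
  have hcross : (m * (3 * w ^ 2) + c / 2 * w ^ 3) ^ 2 ≤ 16 * m ^ 2 * w ^ 4 := by
    have hcw : |c / 2 * w| ≤ m := abs_le.2 ⟨by nlinarith, by nlinarith⟩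
    obtain ⟨h₁, h₂⟩ := abs_le.1 hcw
    calc (m * (3 * w ^ 2) + c / 2 * w ^ 3) ^ 2 = (3 * m + c / 2 * w) ^ 2 * w ^ 4 := by ring
      _ ≤ (4 * m) ^ 2 * w ^ 4 := by
        gcongr 1
        nlinarith
      _ = 16 * m ^ 2 * w ^ 4 := by ring
  have hdiag : -(4 * m ^ 2 * w) ≤ m * (m * (6 * w) + 3 / 2 * c * (3 * w ^ 2) - w ^ 3) := by
    have : -(4 * m * w) ≤ m * (6 * w) + 3 / 2 * c * (3 * w ^ 2) - w ^ 3 := by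
      nlinarith [pow_pos hw 2, pow_pos hw 3]
    nlinarith
  have hdisc : (m * (3 * w ^ 2) + c / 2 * w ^ 3) ^ 2 ≤
      w ^ 3 * (N ^ 2 * w ^ 5 + m * (m * (6 * w) + 3 / 2 * c * (3 * w ^ 2) - w ^ 3)) := by
    have := mul_le_mul_of_nonneg_left hdiag (pow_pos hw 3).le
    have := mul_le_mul_of_nonneg_left hN (pow_pos hw 4).le
    nlinarith [mul_nonneg (sq_nonneg m) (pow_pos hw 4).le]
  linarith [quadratic_nonneg (pow_pos hw 3) hdisc Y V]

end IsTurningInterval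

namespace IsLiouvilleSolution

variable {N t₁ w : ℝ} {v y : ℝ → ℝ}

theorem mid_energy_le (h : IsLiouvilleSolution (edgePotential N t₁ w) v y)
    (hw : IsTurningInterval t₁ w)
    (hN : 172 * ((t₁ + w) * (1 - (t₁ + w))) ^ 2 ≤ N ^ 2 * w ^ 4) :
    y (t₁ + w) ^ 2 + N ^ 2 * w ^ 2 * v (t₁ + w) ^ 2 ≤
      13 * N ^ 2 * w * liouvilleMass v * √((t₁ + w) * (1 - (t₁ + w))) := by
  have hw0 := hw.width_pos
  have hsub : Icc t₁ (t₁ + w) ⊆ Ioo 0 1 := Icc_subset_Ioo hw.left_pos hw.mid_mem.2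
  have hs : ∀ t : ℝ, HasDerivAt (fun t => t - t₁) 1 t := fun t => (hasDerivAt_id' t).sub_const t₁
  have hκ : ∀ t, HasDerivAt (fun t => (t - t₁) ^ 3) (3 * (t - t₁) ^ 2) t :=
    fun t => ((hs t).fun_pow 3).congr_deriv (by norm_num)
  have hκ' : ∀ t, HasDerivAt (fun t => 3 * (t - t₁) ^ 2) (6 * (t - t₁)) t :=
    fun t => (((hs t).fun_pow 2).const_mul 3).congr_deriv (by norm_num; ring)
  have hκ'' : ∀ t, HasDerivAt (fun t => 6 * (t - t₁)) 6 t :=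
    fun t => ((hs t).const_mul 6).congr_deriv (by norm_num)
  have hmono := h.sub_le_mul_mass (by linarith) (hsub.trans Ioo_subset_Icc_self)
    (K := 13 * N ^ 2 * w ^ 4) (by positivity)
    (fun t ht => h.hasDerivAt_virialQuad_div_sqrt (hsub ht) (hasDerivAt_edgePotential N t₁ w t)
      (hκ t) (hκ' t) (hκ'' t))
    fun t ht => by
      gcongr
      exact hw.virialOp_cube_le (Ioo_subset_Icc_self ht) hN
  have hstart : virialQuad (edgePotential N t₁ w t₁) t₁ ((t₁ - t₁) ^ 3) (3 * (t₁ - t₁) ^ 2)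
      (6 * (t₁ - t₁)) (y t₁) (v t₁) = 0 := by
    simp [virialQuad]
  have hpot : edgePotential N t₁ w (t₁ + w) = N ^ 2 * w ^ 2 := by
    unfold edgePotential
    ring
  rw [hstart, zero_div, sub_zero, hpot, add_sub_cancel_left,
    div_le_iff₀ (Real.sqrt_pos.2 (mul_one_sub_pos hw.mid_mem))] at hmono
  refine le_of_mul_le_mul_left ?_ (pow_pos hw0 3)
  linarith [hw.le_virialQuad_cube (y (t₁ + w)) (v (t₁ + w)) hN]

end IsLiouvilleSolution

/-- The virial form for the multiplier `1 / √(t - t₁ + ε)`, divided by `√(t * (1 - t))`. -/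
noncomputable def edgeEnergy (N t₁ w ε : ℝ) (v y : ℝ → ℝ) (t : ℝ) : ℝ :=
  virialQuad (edgePotential N t₁ w t) t (1 / √(t - (t₁ - ε))) (-(1 / 2) / √(t - (t₁ - ε)) ^ 3)
    (3 / 4 / √(t - (t₁ - ε)) ^ 5) (y t) (v t) / √(t * (1 - t))

theorem mul_virialQuad_inv (R t Y V : ℝ) {q u : ℝ} (hq : q ≠ 0) (hu : t * (1 - t) = u * q ^ 2) :
    q * virialQuad R t (1 / q) (-(1 / 2) / q ^ 3) (3 / 4 / q ^ 5) Y V =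
      2 * Y ^ 2 + 2 * R * V ^ 2 + (u - (1 - 2 * t)) * Y * V +
        (3 / 4 * u ^ 2 - 3 / 4 * ((1 - 2 * t) * u) - t * (1 - t)) * V ^ 2 := by
  unfold virialQuad
  rw [hu]
  field_simp
  ring

theorem inv_remainder_nonneg {D c E q : ℝ} (hD : 0 ≤ D) (hc : |c| ≤ 1) (hq1 : q ^ 2 ≤ 1)
    (hE : 8 ≤ E) (hDE : 5 * D ≤ E * q ^ 2) (hDE2 : 2 * D ^ 2 ≤ E * q ^ 4) :
    0 ≤ -(15 / 8) * D ^ 2 + 9 / 4 * (c * D) * q ^ 2 - (3 / 8 - 7 / 2 * D) * q ^ 4 -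
      c * q ^ 6 / 2 + 4 * E * q ^ 4 := by
  obtain ⟨hc₁, hc₂⟩ := abs_le.1 hc
  have hcD : -D * q ^ 2 ≤ c * D * q ^ 2 := by
    gcongr
    nlinarith
  have hcq : c * q ^ 6 ≤ q ^ 4 :=
    calc c * q ^ 6 ≤ 1 * q ^ 6 := by gcongr
      _ = q ^ 4 * q ^ 2 := by ring
      _ ≤ q ^ 4 := mul_le_of_le_one_right (by positivity) hq1
  have hDq : 5 * D * q ^ 2 ≤ E * q ^ 2 * q ^ 2 := by gcongr
  have hEq : 8 * q ^ 4 ≤ E * q ^ 4 := by gcongr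
  have hDq4 : 0 ≤ D * q ^ 4 := by positivity
  have hq4 : 0 ≤ q ^ 4 := by positivity
  linarith

theorem le_quadratic_of_small {u c E D P Q : ℝ} (Y V : ℝ) (hu : 0 ≤ u) (hc : |c| ≤ 1)
    (hD : D ≤ 1 / 4) (hE : 8 ≤ E) (huE : 5 * u ≤ E) (huE2 : 2 * u ^ 2 ≤ E) (hEP : E ≤ P)
    (hPQ : P ≤ Q) :
    Y ^ 2 + P * V ^ 2 ≤ 2 * Y ^ 2 + 2 * Q * V ^ 2 + (u - c) * Y * V +
        (3 / 4 * u ^ 2 - 3 / 4 * (c * u) - D) * V ^ 2 := by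
  obtain ⟨hc₁, hc₂⟩ := abs_le.1 hc
  have hcu : c * u ≤ u := mul_le_of_le_one_left hu hc₂
  have hdiag : (-(3 / 4 * u) - 1 / 4) * V ^ 2 ≤ (3 / 4 * u ^ 2 - 3 / 4 * (c * u) - D) * V ^ 2 := by
    gcongr
    nlinarith
  have hcross : -(Y ^ 2 + (2 * u ^ 2 + 2) / 4 * V ^ 2) ≤ (u - c) * Y * V := by
    have huc : (u - c) ^ 2 * V ^ 2 ≤ (2 * u ^ 2 + 2) * V ^ 2 := by
      gcongr
      nlinarith [sq_nonneg (u + c)]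
    linarith [sq_nonneg (Y + (u - c) * V / 2)]
  have : 0 ≤ (2 * Q - (2 * u ^ 2 + 2) / 4 - 3 / 4 * u - 1 / 4 - P) * V ^ 2 :=
    mul_nonneg (by linarith) (sq_nonneg V)
  linarith

theorem quadratic_le_of_large {u z c D M : ℝ} (Y V : ℝ) (hu : 0 ≤ u) (huz : u ≤ z)
    (hz : 1 ≤ 2 * z) (hc : |c| ≤ 1) (hD : 0 ≤ D) (hM : 172 * z ^ 2 ≤ M) :
    2 * Y ^ 2 + 2 * M * V ^ 2 + (u - c) * Y * V +
        (3 / 4 * u ^ 2 - 3 / 4 * (c * u) - D) * V ^ 2 ≤ 3 * (Y ^ 2 + M * V ^ 2) := by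
  obtain ⟨hc₁, hc₂⟩ := abs_le.1 hc
  have hdiag : (3 / 4 * u ^ 2 - 3 / 4 * (c * u) - D) * V ^ 2 ≤ 9 / 4 * z ^ 2 * V ^ 2 := by
    gcongr
    nlinarith
  have hcross : (u - c) * Y * V ≤ Y ^ 2 + 9 / 4 * z ^ 2 * V ^ 2 := by
    have huc : (u - c) ^ 2 * V ^ 2 ≤ (3 * z) ^ 2 * V ^ 2 := by
      gcongr 1
      exact sq_le_sq' (by linarith) (by linarith)
    linarith [sq_nonneg (Y - (u - c) * V / 2)]
  have hscaled : 172 * z ^ 2 * V ^ 2 ≤ M * V ^ 2 := by gcongr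
  linarith [mul_nonneg (sq_nonneg z) (sq_nonneg V)]

namespace IsEdgeScale

variable {N t₁ w ε t q : ℝ}

theorem mul_one_sub_le (h : IsEdgeScale N t₁ w ε) (hw : IsTurningInterval t₁ w)
    (ht : t ∈ Icc t₁ 1) :
    5 * (t * (1 - t)) ≤ N ^ 2 * w * ε * (t - t₁ + ε) ∧
      2 * (t * (1 - t)) ^ 2 ≤ N ^ 2 * w * ε * (t - t₁ + ε) ^ 2 := by
  have hE := h.eight_le
  have hT := h.sq_le
  have hε := h.pos
  have hs : 0 ≤ t - t₁ := sub_nonneg.2 ht.1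
  have hD0 : 0 ≤ t * (1 - t) := mul_nonneg (hw.left_pos.le.trans ht.1) (sub_nonneg.2 ht.2)
  have hD : t * (1 - t) ≤ t₁ * (1 - t₁) + (t - t₁) := by nlinarith [hw.left_pos]
  have hT0 : 0 ≤ t₁ * (1 - t₁) := (mul_one_sub_pos hw.left_mem).le
  generalize N ^ 2 * w * ε = E at *
  generalize t₁ * (1 - t₁) = T at *
  generalize t - t₁ = s at *
  have hTε : 5 * T ≤ E * ε := by
    refine abs_le_of_sq_le_sq' ?_ (by positivity) |>.2
    nlinarith [mul_le_mul_of_nonneg_left hT (by linarith : 0 ≤ E), sq_nonneg T]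
  constructor
  · nlinarith
  · have hsq := pow_le_pow_left₀ hD0 hD 2
    nlinarith [sq_nonneg (T - s), mul_nonneg hs hε.le, sq_nonneg s, sq_nonneg ε]

theorem neg_le_virialOp_inv (h : IsEdgeScale N t₁ w ε) (hw : IsTurningInterval t₁ w)
    (ht : t ∈ Icc t₁ (t₁ + w)) (hq : 0 < q) (hqt : q ^ 2 = t - (t₁ - ε)) :
    -(2 * N ^ 2 * q) ≤ virialOp (edgePotential N t₁ w t) (2 * N ^ 2 * (t₁ + w - t)) t
      (1 / q) (-(1 / 2) / q ^ 3) (3 / 4 / q ^ 5) (-(15 / 8) / q ^ 7) := by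
  have htI : t ∈ Ioo 0 1 := ⟨hw.left_pos.trans_le ht.1, ht.2.trans_lt hw.mid_mem.2⟩
  obtain ⟨hD1, hD2⟩ := h.mul_one_sub_le hw ⟨ht.1, htI.2.le⟩
  have hqt' : t - t₁ + ε = q ^ 2 := by linarith
  rw [hqt'] at hD1 hD2
  have hrem := inv_remainder_nonneg (q := q) (mul_one_sub_pos htI).le
    (abs_one_sub_two_mul_le_one (Ioo_subset_Icc_self htI))
    (by linarith [ht.2, h.le_width, hw.left_pos, hw.right_lt_one]) h.eight_le hD1 (by linarith)
  have hcleared : q ^ 7 * (virialOp (edgePotential N t₁ w t) (2 * N ^ 2 * (t₁ + w - t)) t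
      (1 / q) (-(1 / 2) / q ^ 3) (3 / 4 / q ^ 5) (-(15 / 8) / q ^ 7) + 2 * N ^ 2 * q) =
      -(15 / 8) * (t * (1 - t)) ^ 2 + 9 / 4 * ((1 - 2 * t) * (t * (1 - t))) * q ^ 2 -
        (3 / 8 - 7 / 2 * (t * (1 - t))) * q ^ 4 - (1 - 2 * t) * q ^ 6 / 2 +
        4 * (N ^ 2 * w * ε) * q ^ 4 + 2 * N ^ 2 * ε ^ 2 * q ^ 4 := by
    unfold virialOp edgePotential
    rw [show t - t₁ = q ^ 2 - ε by linarith, show t₁ + 2 * w - t = 2 * w + ε - q ^ 2 by linarith,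
      show t₁ + w - t = w + ε - q ^ 2 by linarith]
    field_simp
    ring
  have hsq : 0 ≤ N ^ 2 * ε ^ 2 * q ^ 4 := by positivity
  have hnonneg :=
    nonneg_of_mul_nonneg_right (le_of_le_of_eq (by linarith) hcleared.symm) (pow_pos hq 7)
  linarith

end IsEdgeScale

namespace IsLiouvilleSolution

variable {N t₁ w ε t : ℝ} {v y : ℝ → ℝ}

theorem edgeEnergy_le_add (h : IsLiouvilleSolution (edgePotential N t₁ w) v y)
    (hw : IsTurningInterval t₁ w) (hε : IsEdgeScale N t₁ w ε) (ht : t ∈ Icc t₁ (t₁ + w)) :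
    edgeEnergy N t₁ w ε v y t ≤
      edgeEnergy N t₁ w ε v y (t₁ + w) + 2 * N ^ 2 * √(w + ε) * liouvilleMass v := by
  have hsub : Icc t (t₁ + w) ⊆ Ioo 0 1 :=
    Icc_subset_Ioo (hw.left_pos.trans_le ht.1) hw.mid_mem.2
  have hpos : ∀ s ∈ Icc t (t₁ + w), 0 < s - (t₁ - ε) := fun s hs => by
    linarith [hs.1, ht.1, hε.pos]
  have hκ : ∀ s ∈ Icc t (t₁ + w), HasDerivAt (fun s => 1 / √(s - (t₁ - ε)))
      (-(1 / 2) / √(s - (t₁ - ε)) ^ 3) s := fun s hs => by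
    simpa using hasDerivAt_div_sqrt_pow 1 (t₁ - ε) 0 (hpos s hs)
  have hκ' : ∀ s ∈ Icc t (t₁ + w), HasDerivAt (fun s => -(1 / 2) / √(s - (t₁ - ε)) ^ 3)
      (3 / 4 / √(s - (t₁ - ε)) ^ 5) s := fun s hs =>
    (hasDerivAt_div_sqrt_pow (-(1 / 2)) (t₁ - ε) 2 (hpos s hs)).congr_deriv (by norm_num)
  have hκ'' : ∀ s ∈ Icc t (t₁ + w), HasDerivAt (fun s => 3 / 4 / √(s - (t₁ - ε)) ^ 5)
      (-(15 / 8) / √(s - (t₁ - ε)) ^ 7) s := fun s hs =>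
    (hasDerivAt_div_sqrt_pow (3 / 4) (t₁ - ε) 4 (hpos s hs)).congr_deriv (by norm_num)
  have hgain := h.sub_le_mul_mass ht.2 (hsub.trans Ioo_subset_Icc_self)
    (K := 2 * N ^ 2 * √(w + ε)) (by positivity)
    (fun s hs => (h.hasDerivAt_virialQuad_div_sqrt (hsub hs) (hasDerivAt_edgePotential N t₁ w s)
      (hκ s hs) (hκ' s hs) (hκ'' s hs)).neg)
    fun s hs => by
      have hs' := Ioo_subset_Icc_self hs
      have hop := hε.neg_le_virialOp_inv hw ⟨ht.1.trans hs'.1, hs'.2⟩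
        (Real.sqrt_pos.2 (hpos s hs')) (Real.sq_sqrt (hpos s hs').le)
      have hq : √(s - (t₁ - ε)) ≤ √(w + ε) := Real.sqrt_le_sqrt (by linarith [hs'.2])
      rw [← neg_mul]
      gcongr
      linarith [mul_le_mul_of_nonneg_left hq (by positivity : 0 ≤ 2 * N ^ 2)]
  simp only [Pi.neg_apply] at hgain
  unfold edgeEnergy
  linarith

theorem edgeEnergy_mid_le (h : IsLiouvilleSolution (edgePotential N t₁ w) v y)
    (hw : IsTurningInterval t₁ w) (hε : 0 < ε)
    (hN : 172 * ((t₁ + w) * (1 - (t₁ + w))) ^ 2 ≤ N ^ 2 * w ^ 4) :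
    edgeEnergy N t₁ w ε v y (t₁ + w) ≤ 39 * N ^ 2 * √(w + ε) * liouvilleMass v := by
  have hw0 := hw.width_pos
  have hm := hw.width_le_two_mul_mid
  have hm0 := mul_one_sub_pos hw.mid_mem
  have hp : 0 < √(w + ε) := Real.sqrt_pos.2 (by linarith)
  have hp2 : √(w + ε) ^ 2 = w + ε := Real.sq_sqrt (by linarith)
  have hlarge : 172 * ((t₁ + w) * (1 - (t₁ + w)) / w) ^ 2 ≤ N ^ 2 * w ^ 2 := by
    rw [div_pow, ← mul_div_assoc, div_le_iff₀ (by positivity)]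
    linarith
  have hquad := quadratic_le_of_large (y (t₁ + w)) (v (t₁ + w))
    (div_nonneg hm0.le (sq_nonneg √(w + ε)))
    (div_le_div_of_nonneg_left hm0.le hw0 (by linarith : w ≤ √(w + ε) ^ 2))
    (by rwa [← mul_div_assoc, one_le_div hw0])
    (abs_one_sub_two_mul_le_one (Ioo_subset_Icc_self hw.mid_mem)) hm0.le hlarge
  have hpot : edgePotential N t₁ w (t₁ + w) = N ^ 2 * w ^ 2 := by
    unfold edgePotential
    ring
  rw [← mul_virialQuad_inv _ _ _ _ hp.ne' (div_mul_cancel₀ _ (pow_pos hp 2).ne').symm,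
    ← hpot] at hquad
  have hmid := h.mid_energy_le hw hN
  rw [edgeEnergy, show t₁ + w - (t₁ - ε) = w + ε by ring, div_le_iff₀ (Real.sqrt_pos.2 hm0)]
  refine le_of_mul_le_mul_left ?_ hp
  have hmass : w * (N ^ 2 * liouvilleMass v * √((t₁ + w) * (1 - (t₁ + w)))) ≤
      √(w + ε) ^ 2 * (N ^ 2 * liouvilleMass v * √((t₁ + w) * (1 - (t₁ + w)))) := by
    have := liouvilleMass_nonneg v
    gcongr
    linarith
  rw [hpot] at hquad ⊢
  linarith

theorem energy_le (h : IsLiouvilleSolution (edgePotential N t₁ w) v y)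
    (hw : IsTurningInterval t₁ w) (hε : IsEdgeScale N t₁ w ε)
    (hN : 172 * ((t₁ + w) * (1 - (t₁ + w))) ^ 2 ≤ N ^ 2 * w ^ 4)
    (ht : t ∈ Icc (t₁ + ε) (t₁ + w)) :
    y t ^ 2 + N ^ 2 * w * (t - t₁) * v t ^ 2 ≤
      41 * N ^ 2 * √(w + ε) * √(t - t₁ + ε) * liouvilleMass v * √(t * (1 - t)) := by
  have ht₁ : t ∈ Icc t₁ (t₁ + w) := ⟨by linarith [ht.1, hε.pos], ht.2⟩
  have hs : ε ≤ t - t₁ := by linarith [ht.1]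
  have htI : t ∈ Ioo 0 1 := ⟨hw.left_pos.trans_le ht₁.1, ht.2.trans_lt hw.mid_mem.2⟩
  have hq : 0 < √(t - t₁ + ε) := Real.sqrt_pos.2 (by linarith [hε.pos])
  have hq2 : √(t - t₁ + ε) ^ 2 = t - t₁ + ε := Real.sq_sqrt (by linarith [hε.pos])
  have hbound : edgeEnergy N t₁ w ε v y t ≤ 41 * N ^ 2 * √(w + ε) * liouvilleMass v := by
    linarith [h.edgeEnergy_le_add hw hε ht₁, h.edgeEnergy_mid_le hw hε.pos hN]
  obtain ⟨hD1, hD2⟩ := hε.mul_one_sub_le hw ⟨ht₁.1, htI.2.le⟩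
  have hNw : 0 ≤ N ^ 2 * w := mul_nonneg (sq_nonneg N) hw.width_pos.le
  have hEP : N ^ 2 * w * ε ≤ N ^ 2 * w * (t - t₁) := by gcongr
  have hPQ : N ^ 2 * w * (t - t₁) ≤ edgePotential N t₁ w t := by
    unfold edgePotential
    nlinarith [mul_nonneg (mul_nonneg (sq_nonneg N) (sub_nonneg.2 ht₁.1)) (sub_nonneg.2 ht.2)]
  rw [← hq2] at hD1 hD2
  have hquad := le_quadratic_of_small (y t) (v t)
    (div_nonneg (mul_one_sub_pos htI).le (sq_nonneg √(t - t₁ + ε)))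
    (abs_one_sub_two_mul_le_one (Ioo_subset_Icc_self htI))
    (by nlinarith [sq_nonneg (1 - 2 * t)] : t * (1 - t) ≤ 1 / 4) hε.eight_le
    (by rwa [← mul_div_assoc, div_le_iff₀ (by positivity)])
    (by rwa [div_pow, ← mul_div_assoc, div_le_iff₀ (by positivity)]) hEP hPQ
  rw [← mul_virialQuad_inv _ _ _ _ hq.ne' (div_mul_cancel₀ _ (pow_pos hq 2).ne').symm] at hquad
  rw [edgeEnergy, show t - (t₁ - ε) = t - t₁ + ε by ring,
    div_le_iff₀ (Real.sqrt_pos.2 (mul_one_sub_pos htI))] at hbound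
  linarith [mul_le_mul_of_nonneg_left hbound hq.le]

end IsLiouvilleSolution

theorem neg_le_energy_deriv {E D c R l : ℝ} (Y V : ℝ) (hE : 0 < E) (hR : R ∈ Icc 0 (2 * E))
    (hD : 0 < D) (hc : |c| ≤ 1) (hl : 1 + √E ≤ l * D) :
    -(l * (Y ^ 2 + E * V ^ 2)) ≤ 2 * Y * ((c / 2 * Y - R * V) / D) + E * (2 * V * (Y / D)) := by
  have hg : 0 < √E := Real.sqrt_pos.2 hE
  have hg2 : √E ^ 2 = E := Real.sq_sqrt hE.le
  have hcross := quadratic_nonneg (b := R - E) (c := √E * E) hg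
    (by nlinarith [hR.1, hR.2]) Y V
  have hcY : -Y ^ 2 ≤ c * Y ^ 2 := by nlinarith [(abs_le.1 hc).1, sq_nonneg Y]
  have hlD : (1 + √E) * (Y ^ 2 + E * V ^ 2) ≤ l * D * (Y ^ 2 + E * V ^ 2) := by gcongr
  have hEV : 0 ≤ E * V ^ 2 := by positivity
  rw [show 2 * Y * ((c / 2 * Y - R * V) / D) + E * (2 * V * (Y / D)) =
    (c * Y ^ 2 + 2 * (E - R) * Y * V) / D by ring, le_div_iff₀ hD]
  linarith

theorem edgePotential_mem_Icc (N : ℝ) {t₁ w ε t : ℝ} (ht : t ∈ Icc t₁ (t₁ + w))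
    (htε : t ≤ t₁ + ε) : edgePotential N t₁ w t ∈ Icc 0 (2 * (N ^ 2 * w * ε)) := by
  have hw : 0 ≤ w := by linarith [ht.1, ht.2]
  have hleft : t - t₁ ∈ Icc 0 ε := ⟨by linarith [ht.1], by linarith⟩
  have hright : t₁ + 2 * w - t ∈ Icc 0 (2 * w) := ⟨by linarith [ht.2], by linarith [ht.1]⟩
  refine ⟨mul_nonneg (mul_nonneg (sq_nonneg N) hleft.1) hright.1, ?_⟩
  calc N ^ 2 * (t - t₁) * (t₁ + 2 * w - t) ≤ N ^ 2 * ε * (2 * w) :=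
        mul_le_mul (mul_le_mul_of_nonneg_left hleft.2 (sq_nonneg N)) hright.2 hright.1
          (mul_nonneg (sq_nonneg N) (hleft.1.trans hleft.2))
    _ = 2 * (N ^ 2 * w * ε) := by ring

theorem fourth_power_le_of_sq_le {w ε σ T K H V : ℝ} (hε : 0 < ε) (hεw : ε ≤ w) (hεσ : ε ≤ σ)
    (hT : 0 ≤ T) (h : w * σ * V ^ 2 ≤ K * (√(w + ε) * √(σ + ε)) * H * √(T + σ)) :
    w * ε * V ^ 4 ≤ 4 * K ^ 2 * (T + ε) * H ^ 2 := by
  have hw : 0 < w := hε.trans_le hεw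
  have hσ : 0 < σ := hε.trans_le hεσ
  have hsq := pow_le_pow_left₀ (by positivity) h 2
  simp only [mul_pow, Real.sq_sqrt (by positivity : 0 ≤ w + ε),
    Real.sq_sqrt (by positivity : 0 ≤ σ + ε), Real.sq_sqrt (by positivity : 0 ≤ T + σ)] at hsq
  have hfactors : (w + ε) * (σ + ε) * ((T + σ) * ε) ≤ 2 * w * (2 * σ) * ((T + ε) * σ) := by
    gcongr ?_ * ?_ * ?_
    · linarith
    · linarith
    · nlinarith
  have hscaled := mul_le_mul_of_nonneg_left hfactors (by positivity : 0 ≤ K ^ 2 * H ^ 2)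
  refine le_of_mul_le_mul_left ?_ (by positivity : 0 < w * σ ^ 2)
  linarith [mul_le_mul_of_nonneg_left hsq hε.le]

theorem IsTurningInterval.mul_one_sub_le_two_mul {t₁ w t : ℝ} (h : IsTurningInterval t₁ w)
    (ht : t ∈ Icc t₁ (t₁ + w)) : t₁ * (1 - t₁) ≤ 2 * (t * (1 - t)) := by
  nlinarith [ht.1, ht.2, h.left_pos, h.right_lt_one, h.width_pos]

namespace IsLiouvilleSolution

variable {N t₁ w ε A t : ℝ} {v y : ℝ → ℝ}

theorem energy_le_exp_mul_energy (h : IsLiouvilleSolution (edgePotential N t₁ w) v y)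
    (hw : IsTurningInterval t₁ w) (hε : IsEdgeScale N t₁ w ε)
    (hA : N ^ 2 * w * ε * ε ^ 2 = A * (t₁ * (1 - t₁)) ^ 2) (ht : t ∈ Icc t₁ (t₁ + ε)) :
    N ^ 2 * w * ε * v t ^ 2 ≤
      Real.exp (4 * √A) * (y (t₁ + ε) ^ 2 + N ^ 2 * w * ε * v (t₁ + ε) ^ 2) := by
  have hε0 := hε.pos
  have hE : 0 < N ^ 2 * w * ε := by linarith [hε.eight_le]
  have hT := mul_one_sub_pos hw.left_mem
  have hroot : √(N ^ 2 * w * ε) * ε = √A * (t₁ * (1 - t₁)) := by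
    rw [← Real.sqrt_sq hT.le, ← Real.sqrt_mul' A (sq_nonneg _), ← hA,
      Real.sqrt_mul' _ (sq_nonneg _), Real.sqrt_sq hε0.le]
  have hone : 1 ≤ √(N ^ 2 * w * ε) := Real.one_le_sqrt.2 (by linarith [hε.eight_le])
  have hmem : ∀ s ∈ Icc t (t₁ + ε), s ∈ Icc t₁ (t₁ + w) ∧ s ∈ Ioo 0 1 := fun s hs => by
    have hs' : s ∈ Icc t₁ (t₁ + w) := ⟨ht.1.trans hs.1, by linarith [hs.2, hε.le_width]⟩
    exact ⟨hs', hw.left_pos.trans_le hs'.1, hs'.2.trans_lt hw.mid_mem.2⟩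
  have hgrowth := le_exp_mul_of_neg_mul_le_deriv (l := 4 * √A / ε) ht.2
    (fun s hs => ((h.hasDerivAt_flux s (hmem s hs).2).fun_pow 2).fun_add
      (((h.hasDerivAt s (hmem s hs).2).fun_pow 2).const_mul (N ^ 2 * w * ε)))
    fun s hs => by
      obtain ⟨hsw, hsI⟩ := hmem s (Ioo_subset_Icc_self hs)
      have hl : 1 + √(N ^ 2 * w * ε) ≤ 4 * √A / ε * (s * (1 - s)) := by
        rw [div_mul_eq_mul_div, le_div_iff₀ hε0]
        linarith [mul_le_mul_of_nonneg_left (hw.mul_one_sub_le_two_mul hsw) (Real.sqrt_nonneg A),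
          mul_le_mul_of_nonneg_right hone hε0.le]
      have hderiv := neg_le_energy_deriv (y s) (v s) hE
        (edgePotential_mem_Icc N hsw hs.2.le) (mul_one_sub_pos hsI)
        (abs_one_sub_two_mul_le_one (Ioo_subset_Icc_self hsI)) hl
      simpa using hderiv
  have hexp : Real.exp (4 * √A / ε * (t₁ + ε - t)) ≤ Real.exp (4 * √A) := by
    rw [Real.exp_le_exp, div_mul_eq_mul_div, div_le_iff₀ hε0]
    gcongr
    linarith [ht.1]
  calc N ^ 2 * w * ε * v t ^ 2 ≤ y t ^ 2 + N ^ 2 * w * ε * v t ^ 2 :=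
        le_add_of_nonneg_left (sq_nonneg _)
    _ ≤ _ := hgrowth
    _ ≤ _ := by gcongr

theorem exists_sq_le_of_edgeScale (h : IsLiouvilleSolution (edgePotential N t₁ w) v y)
    (hw : IsTurningInterval t₁ w) (hε : IsEdgeScale N t₁ w ε)
    (hN : 172 * ((t₁ + w) * (1 - (t₁ + w))) ^ 2 ≤ N ^ 2 * w ^ 4)
    (hA : N ^ 2 * w * ε * ε ^ 2 = A * (t₁ * (1 - t₁)) ^ 2) (ht : t ∈ Icc t₁ (t₁ + w)) :
    ∃ σ, ε ≤ σ ∧ w * σ * v t ^ 2 ≤ 41 * Real.exp (4 * √A) * (√(w + ε) * √(σ + ε)) *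
      liouvilleMass v * √(t₁ * (1 - t₁) + σ) := by
  have hε0 := hε.pos
  have hN2 : 0 < N ^ 2 := by
    refine (sq_nonneg N).lt_of_ne fun h0 => ?_
    linarith [hε.eight_le, show N ^ 2 * w * ε = 0 by rw [← h0]; ring]
  have hH := liouvilleMass_nonneg v
  have henergy : ∀ s ∈ Icc (t₁ + ε) (t₁ + w), y s ^ 2 + N ^ 2 * w * (s - t₁) * v s ^ 2 ≤
      41 * N ^ 2 * √(w + ε) * √(s - t₁ + ε) * liouvilleMass v *
        √(t₁ * (1 - t₁) + (s - t₁)) := fun s hs => by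
    refine (h.energy_le hw hε hN hs).trans ?_
    gcongr
    nlinarith [hs.1, hw.left_pos]
  rcases le_total (t₁ + ε) t with hεt | htε
  · refine ⟨t - t₁, by linarith, le_of_mul_le_mul_left ?_ hN2⟩
    have hexp : 1 ≤ Real.exp (4 * √A) := Real.one_le_exp (by positivity)
    have hscaled := le_mul_of_one_le_left (by positivity :
      0 ≤ 41 * N ^ 2 * √(w + ε) * √(t - t₁ + ε) * liouvilleMass v *
        √(t₁ * (1 - t₁) + (t - t₁))) hexp
    linarith [henergy t ⟨hεt, ht.2⟩, sq_nonneg (y t)]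
  · refine ⟨ε, le_rfl, le_of_mul_le_mul_left ?_ hN2⟩
    have hedge := henergy (t₁ + ε) ⟨le_rfl, by linarith [hε.le_width]⟩
    rw [add_sub_cancel_left] at hedge
    linarith [h.energy_le_exp_mul_energy hw hε hA ⟨ht.1, htε⟩,
      mul_le_mul_of_nonneg_left hedge (Real.exp_nonneg (4 * √A))]

theorem fourth_power_le (h : IsLiouvilleSolution (edgePotential N t₁ w) v y)
    (hw : IsTurningInterval t₁ w) (hε : IsEdgeScale N t₁ w ε)
    (hN : 172 * ((t₁ + w) * (1 - (t₁ + w))) ^ 2 ≤ N ^ 2 * w ^ 4)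
    (hA : N ^ 2 * w * ε * ε ^ 2 = A * (t₁ * (1 - t₁)) ^ 2) (ht : t ∈ Icc t₁ (t₁ + w)) :
    w * ε * v t ^ 4 ≤
      4 * (41 * Real.exp (4 * √A)) ^ 2 * (t₁ * (1 - t₁) + ε) * liouvilleMass v ^ 2 := by
  obtain ⟨σ, hεσ, hσ⟩ := h.exists_sq_le_of_edgeScale hw hε hN hA ht
  exact fourth_power_le_of_sq_le hε.pos hε.le_width hεσ (mul_one_sub_pos hw.left_mem).le hσ

end IsLiouvilleSolution

theorem IsTurningInterval.exists_isEdgeScale {N t₁ w A : ℝ} (h : IsTurningInterval t₁ w)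
    (hA : 4 ≤ A) (hT : 512 ≤ A * (N ^ 2 * w * (t₁ * (1 - t₁))) ^ 2)
    (hN : 4 * A * ((t₁ + w) * (1 - (t₁ + w))) ^ 2 ≤ N ^ 2 * w ^ 4) :
    ∃ ε, IsEdgeScale N t₁ w ε ∧ N ^ 2 * w * ε * ε ^ 2 = A * (t₁ * (1 - t₁)) ^ 2 := by
  have hN0 : N ≠ 0 := by
    rintro rfl
    norm_num at hT
  have hw := h.width_pos
  have hT0 := mul_one_sub_pos h.left_mem
  have hTm := h.mul_one_sub_le_two_mul (right_mem_Icc.2 (by linarith : t₁ ≤ t₁ + w))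
  set T := t₁ * (1 - t₁)
  set ε := (A * T ^ 2 / (N ^ 2 * w)) ^ (3⁻¹ : ℝ)
  have hε : 0 < ε := by positivity
  have hcube : N ^ 2 * w * ε * ε ^ 2 = A * T ^ 2 := by
    have hε3 : ε ^ 3 = A * T ^ 2 / (N ^ 2 * w) :=
      Real.rpow_inv_natCast_pow (by positivity) three_ne_zero
    rw [mul_assoc, ← pow_succ', hε3, mul_div_cancel₀ _ (by positivity)]
  refine ⟨ε, ⟨hε, ?_, ?_, ?_⟩, hcube⟩
  · refine le_of_pow_le_pow_left₀ three_ne_zero hw.le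
      (le_of_mul_le_mul_left ?_ (by positivity : 0 < N ^ 2 * w))
    have hsq : A * T ^ 2 ≤ A * (2 * ((t₁ + w) * (1 - (t₁ + w)))) ^ 2 := by gcongr
    linarith
  · refine le_of_pow_le_pow_left₀ three_ne_zero (by positivity) ?_
    calc (8 : ℝ) ^ 3 ≤ A * (N ^ 2 * w * T) ^ 2 := by linarith
      _ = (N ^ 2 * w * ε) ^ 3 := by linear_combination -(N ^ 2 * w) ^ 2 * hcube
  · rw [hcube]
    gcongr

theorem IsLiouvilleSolution.twelfth_power_le {N t₁ w c A t : ℝ} {v y : ℝ → ℝ}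
    (h : IsLiouvilleSolution (edgePotential N t₁ w) v y) (hw : IsTurningInterval t₁ w)
    (hc : 0 < c) (hcT : c ≤ N ^ 2 * w * (t₁ * (1 - t₁))) (hA : 4 ≤ A) (hcA : 512 ≤ A * c ^ 2)
    (hN : (172 + 4 * A) * ((t₁ + w) * (1 - (t₁ + w))) ^ 2 ≤ N ^ 2 * w ^ 4)
    (ht : t ∈ Icc t₁ (t₁ + w)) :
    v t ^ 12 ≤ 256 * (41 * Real.exp (4 * √A)) ^ 6 * (1 / A + 1 / c) *
      (N ^ 2 * (t₁ * (1 - t₁)) / w ^ 2) * liouvilleMass v ^ 6 := by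
  have hw0 := hw.width_pos
  have hm2 := sq_nonneg ((t₁ + w) * (1 - (t₁ + w)))
  obtain ⟨ε, hε, hcube⟩ := hw.exists_isEdgeScale (N := N) hA
    (hcA.trans (by gcongr)) (by linarith)
  have hε0 := hε.pos
  have hfourth := h.fourth_power_le hw hε
    (by linarith [mul_nonneg (by linarith : 0 ≤ 4 * A) hm2]) hcube ht
  have hT := mul_one_sub_pos hw.left_mem
  set T := t₁ * (1 - t₁)
  set K := 41 * Real.exp (4 * √A)
  set H := liouvilleMass v
  have hadd : (T + ε) ^ 3 ≤ 4 * (T ^ 3 + ε ^ 3) := by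
    nlinarith [mul_nonneg (add_pos hT hε0).le (sq_nonneg (T - ε))]
  have hcubed : w ^ 3 * ε ^ 3 * v t ^ 12 ≤ 256 * K ^ 6 * (T ^ 3 + ε ^ 3) * H ^ 6 := by
    have hfourth3 := pow_le_pow_left₀ (by positivity) hfourth 3
    linarith [mul_le_mul_of_nonneg_left hadd (by positivity : 0 ≤ 64 * K ^ 6 * H ^ 6)]
  have hscale : N ^ 2 * ε ^ 3 ≤ A * T ^ 3 * N ^ 2 / c := by
    rw [le_div_iff₀ hc]
    calc N ^ 2 * ε ^ 3 * c ≤ N ^ 2 * ε ^ 3 * (N ^ 2 * w * T) := by gcongr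
      _ = A * T ^ 3 * N ^ 2 := by linear_combination (N ^ 2 * T) * hcube
  have hprod : A * T ^ 2 * w ^ 2 * v t ^ 12 ≤
      256 * K ^ 6 * (N ^ 2 * T ^ 3 + A * T ^ 3 * N ^ 2 / c) * H ^ 6 := by
    calc A * T ^ 2 * w ^ 2 * v t ^ 12 = N ^ 2 * (w ^ 3 * ε ^ 3 * v t ^ 12) := by
          linear_combination -(w ^ 2 * v t ^ 12) * hcube
      _ ≤ N ^ 2 * (256 * K ^ 6 * (T ^ 3 + ε ^ 3) * H ^ 6) := by gcongr
      _ = 256 * K ^ 6 * (N ^ 2 * T ^ 3 + N ^ 2 * ε ^ 3) * H ^ 6 := by ring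
      _ ≤ _ := by gcongr
  refine le_of_mul_le_mul_left (hprod.trans_eq ?_) (by positivity : 0 < A * T ^ 2 * w ^ 2)
  field_simp

namespace IsLiouvilleSolution

variable {R v y : ℝ → ℝ} {t t₀ t₁ : ℝ}

theorem hasDerivAt_mul_flux_div_sqrt (h : IsLiouvilleSolution R v y) (ht : t ∈ Ioo 0 1) :
    HasDerivAt (fun t => v t * y t / √(t * (1 - t)))
      ((y t ^ 2 - R t * v t ^ 2) / (t * (1 - t) * √(t * (1 - t)))) t := by
  have hD := mul_one_sub_pos ht
  refine (((h.hasDerivAt t ht).fun_mul (h.hasDerivAt_flux t ht)).fun_div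
    (hasDerivAt_sqrt_mul_one_sub ht) (Real.sqrt_pos.2 hD).ne').congr_deriv ?_
  obtain ⟨q, hq, hqD⟩ : ∃ q, 0 < q ∧ t * (1 - t) = q ^ 2 :=
    ⟨_, Real.sqrt_pos.2 hD, (Real.sq_sqrt hD.le).symm⟩
  rw [hqD, Real.sqrt_sq hq.le]
  field_simp
  ring

theorem hasDerivAt_sq (h : IsLiouvilleSolution R v y) (ht : t ∈ Ioo 0 1) :
    HasDerivAt (fun t => v t ^ 2) (2 * (v t * y t) / (t * (1 - t))) t :=
  ((h.hasDerivAt t ht).fun_pow 2).congr_deriv (by ring)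

theorem eq_zero_of_mul_flux_nonpos (h : IsLiouvilleSolution R v y)
    (hR : ∀ t ∈ Ioo 0 t₀, R t ≤ 0) (ht₀ : t₀ ∈ Ioo 0 1) (hc : v t₀ * y t₀ ≤ 0) : v t₀ = 0 := by
  have hmem : Ioc 0 t₀ ⊆ Ioo 0 1 := fun t ht => ⟨ht.1, ht.2.trans_lt ht₀.2⟩
  have hmono : MonotoneOn (fun t => v t * y t / √(t * (1 - t))) (Ioc 0 t₀) := by
    refine monotoneOn_of_hasDerivWithinAt_nonneg (convex_Ioc 0 t₀)
      (fun t ht =>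
        (h.hasDerivAt_mul_flux_div_sqrt (hmem ht)).continuousAt.continuousWithinAt)
      (fun t ht => (h.hasDerivAt_mul_flux_div_sqrt
        (hmem (interior_subset ht))).hasDerivWithinAt) fun t ht => ?_
    have htI := hmem (interior_subset ht)
    rw [interior_Ioc] at ht
    have hRv : R t * v t ^ 2 ≤ 0 := mul_nonpos_of_nonpos_of_nonneg (hR t ht) (sq_nonneg _)
    exact div_nonneg (by linarith [sq_nonneg (y t)])
      (mul_nonneg (mul_one_sub_pos htI).le (Real.sqrt_nonneg _))
  have hflux : ∀ t ∈ Ioo 0 t₀, v t * y t ≤ 0 := fun t ht => by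
    have hle := hmono (Ioo_subset_Ioc_self ht) (right_mem_Ioc.2 ht₀.1) ht.2.le
    have hq := Real.sqrt_pos.2 (mul_one_sub_pos (hmem (Ioo_subset_Ioc_self ht)))
    by_contra! hpos
    linarith [div_pos hpos hq, div_nonpos_of_nonpos_of_nonneg hc (Real.sqrt_nonneg (t₀ * (1 - t₀)))]
  have hanti : AntitoneOn (fun t => v t ^ 2) (Icc 0 t₀) := by
    refine antitoneOn_of_hasDerivWithinAt_nonpos (convex_Icc 0 t₀)
      ((h.continuousOn.mono (Icc_subset_Icc_right ht₀.2.le)).pow 2)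
      (f' := fun t => 2 * (v t * y t) / (t * (1 - t))) (fun t ht => ?_) fun t ht => ?_ <;>
      rw [interior_Icc] at ht
    · exact (h.hasDerivAt_sq (hmem (Ioo_subset_Ioc_self ht))).hasDerivWithinAt
    · exact div_nonpos_of_nonpos_of_nonneg (by linarith [hflux t ht])
        (mul_one_sub_pos (hmem (Ioo_subset_Ioc_self ht))).le
  have hle := hanti (left_mem_Icc.2 ht₀.1.le) (right_mem_Icc.2 ht₀.1.le) ht₀.1.le
  exact pow_eq_zero_iff two_ne_zero |>.1 (le_antisymm (by simpa [h.map_zero] using hle)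
    (sq_nonneg _))

theorem mul_flux_nonneg (h : IsLiouvilleSolution R v y) (hR : ∀ t ∈ Ioo 0 t₀, R t ≤ 0)
    (ht₀ : t₀ ∈ Ioo 0 1) : 0 ≤ v t₀ * y t₀ := by
  by_contra! hneg
  rw [h.eq_zero_of_mul_flux_nonpos hR ht₀ hneg.le, zero_mul] at hneg
  exact hneg.false

theorem exists_forall_sq_le (h : IsLiouvilleSolution R v y) :
    ∃ t₀ ∈ Ioo (0 : ℝ) 1, v t₀ * y t₀ = 0 ∧ ∀ t ∈ Icc 0 1, v t ^ 2 ≤ v t₀ ^ 2 := by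
  obtain ⟨t₀, ht₀, hmax⟩ := isCompact_Icc.exists_isMaxOn
    (nonempty_Icc.2 (zero_le_one (α := ℝ))) (h.continuousOn.pow 2)
  have hle : ∀ t ∈ Icc 0 1, v t ^ 2 ≤ v t₀ ^ 2 := fun t ht => hmax ht
  by_cases hz : v t₀ = 0
  · have hhalf : (1 / 2 : ℝ) ∈ Ioo 0 1 := by norm_num
    have hzero : ∀ t ∈ Icc 0 1, v t = 0 := fun t ht =>
      pow_eq_zero_iff two_ne_zero |>.1 (le_antisymm (by simpa [hz] using hle t ht) (sq_nonneg _))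
    refine ⟨1 / 2, hhalf, by rw [hzero _ (Ioo_subset_Icc_self hhalf), zero_mul], fun t ht => ?_⟩
    rw [hzero t ht, hzero _ (Ioo_subset_Icc_self hhalf)]
  · have hI : t₀ ∈ Ioo 0 1 := by
      refine ⟨ht₀.1.lt_of_ne ?_, ht₀.2.lt_of_ne ?_⟩
      · rintro rfl
        exact hz h.map_zero
      · rintro rfl
        exact hz h.map_one
    have hcrit := (hmax.isLocalMax (Icc_mem_nhds hI.1 hI.2)).hasDerivAt_eq_zero
      (h.hasDerivAt_sq hI)
    refine ⟨t₀, hI, ?_, hle⟩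
    rw [div_eq_zero_iff, or_iff_left (mul_one_sub_pos hI).ne'] at hcrit
    linarith

theorem sub_le_mul_mass_of_potential_le {φ s : ℝ} (h : IsLiouvilleSolution R v y)
    (hR : ∀ t ∈ Ioo 0 1, R t ≤ φ ^ 2 * (t * (1 - t))) (hs : 0 < s) (hst : s ≤ t) (ht : t < 1) :
    φ * v t ^ 2 - v t * y t / √(t * (1 - t)) - (φ * v s ^ 2 - v s * y s / √(s * (1 - s))) ≤
      2 * φ ^ 2 * liouvilleMass v := by
  have hmem : ∀ r ∈ Icc s t, r ∈ Ioo 0 1 := fun r hr => ⟨hs.trans_le hr.1, hr.2.trans_lt ht⟩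
  refine h.sub_le_mul_mass (F := fun r => φ * v r ^ 2 - v r * y r / √(r * (1 - r))) hst
    (fun r hr => Ioo_subset_Icc_self (hmem r hr)) (by positivity)
    (fun r hr => ((h.hasDerivAt_sq (hmem r hr)).const_mul φ).fun_sub
      (h.hasDerivAt_mul_flux_div_sqrt (hmem r hr))) fun r hr => ?_
  have hrI := hmem r (Ioo_subset_Icc_self hr)
  have hD := mul_one_sub_pos hrI
  have hRr := hR r hrI
  obtain ⟨q, hq, hqD⟩ : ∃ q, 0 < q ∧ r * (1 - r) = q ^ 2 :=
    ⟨_, Real.sqrt_pos.2 hD, (Real.sq_sqrt hD.le).symm⟩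
  rw [hqD] at hRr ⊢
  rw [Real.sqrt_sq hq.le, ← mul_div_assoc, ← sub_nonneg]
  have hRv : R r * v r ^ 2 ≤ φ ^ 2 * q ^ 2 * v r ^ 2 := by gcongr
  have hnum : 0 ≤ (φ * q * v r - y r) ^ 2 + (φ ^ 2 * q ^ 2 * v r ^ 2 - R r * v r ^ 2) := by
    linarith [sq_nonneg (φ * q * v r - y r)]
  refine (div_nonneg hnum (pow_pos hq 3).le).trans_eq ?_
  field_simp
  ring

theorem sq_le_of_potential_le {φ : ℝ} (h : IsLiouvilleSolution R v y) (hφ : 0 < φ)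
    (hR : ∀ t ∈ Ioo 0 1, R t ≤ φ ^ 2 * (t * (1 - t))) (ht₁ : 0 < t₁)
    (hR₁ : ∀ t ∈ Ioo 0 t₁, R t ≤ 0) (ht₀ : t₀ ∈ Ioo 0 1) (hc : v t₀ * y t₀ = 0) :
    v t₀ ^ 2 ≤ 2 * φ * liouvilleMass v := by
  have hstep : ∀ s ∈ Ioo 0 (min t₀ t₁),
      φ * v t₀ ^ 2 - 2 * φ ^ 2 * liouvilleMass v ≤ φ * v s ^ 2 := by
    intro s hs
    obtain ⟨hs₀, hs₁⟩ := lt_min_iff.1 hs.2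
    have hgain := h.sub_le_mul_mass_of_potential_le hR hs.1 hs₀.le ht₀.2
    have hflux : 0 ≤ v s * y s / √(s * (1 - s)) :=
      div_nonneg (h.mul_flux_nonneg (fun t ht => hR₁ t ⟨ht.1, ht.2.trans hs₁⟩)
        ⟨hs.1, hs₀.trans ht₀.2⟩) (Real.sqrt_nonneg _)
    rw [hc, zero_div, sub_zero] at hgain
    linarith
  have hlim : Filter.Tendsto (fun s => φ * v s ^ 2) (nhdsWithin 0 (Ioo 0 (min t₀ t₁)))
      (nhds (φ * 0 ^ 2)) := by
    have hv := h.continuousOn 0 (left_mem_Icc.2 zero_le_one)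
    rw [ContinuousWithinAt, h.map_zero] at hv
    exact ((hv.mono_left (nhdsWithin_mono 0 fun s hs => ⟨hs.1.le, hs.2.le.trans
      ((min_le_left _ _).trans ht₀.2.le)⟩)).pow 2).const_mul φ
  have := left_nhdsWithin_Ioo_neBot (lt_min ht₀.1 ht₁)
  have hle := ge_of_tendsto hlim (eventually_mem_nhdsWithin.mono hstep)
  refine le_of_mul_le_mul_left ?_ hφ
  linarith

end IsLiouvilleSolution

/-- The Jacobi polynomial on `[0, 1]`, weighted so that it solves an equation in Liouville normal
form. -/
noncomputable def weightedJacobi (a b : ℝ) (n : ℕ) (t : ℝ) : ℝ :=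
  jacobiWeight (a / 2 + 1 / 4) (b / 2 + 1 / 4) t * unitJacobi a b n t

/-- The flux `t * (1 - t) * dv/dt` of `v = weightedJacobi a b n`. -/
noncomputable def weightedJacobiFlux (a b : ℝ) (n : ℕ) (t : ℝ) : ℝ :=
  jacobiWeight (a / 2 + 1 / 4) (b / 2 + 1 / 4) t * (t * (1 - t) * deriv (unitJacobi a b n) t +
    ((a / 2 + 1 / 4) * (1 - t) - (b / 2 + 1 / 4) * t) * unitJacobi a b n t)

/-- The leading coefficient in the Liouville normal form of the Jacobi equation is the square of
this frequency. -/
noncomputable def jacobiFreq (a b n : ℝ) : ℝ := n + (a + b + 1) / 2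

/-- The potential in the Liouville normal form of the Jacobi equation. -/
noncomputable def jacobiPotential (a b n t : ℝ) : ℝ :=
  jacobiFreq a b n ^ 2 * (t * (1 - t)) - (a ^ 2 - 1 / 4) / 4 * (1 - t) - (b ^ 2 - 1 / 4) / 4 * t

theorem jacobiFreq_comm (a b n : ℝ) : jacobiFreq a b n = jacobiFreq b a n := by
  rw [jacobiFreq, jacobiFreq, add_comm a b]

theorem weightedJacobi_sq_div_sqrt (a b : ℝ) (n : ℕ) {t : ℝ} (ht : t ∈ Ioo 0 1) :
    weightedJacobi a b n t ^ 2 / √(t * (1 - t)) = jacobiWeight a b t * unitJacobi a b n t ^ 2 := by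
  have ht' : 0 < 1 - t := sub_pos.2 ht.2
  have hpow : ∀ {x : ℝ} (c : ℝ), 0 < x → (x ^ (c / 2 + 1 / 4)) ^ 2 = x ^ c * √x := by
    intro x c hx
    rw [← Real.rpow_natCast, ← Real.rpow_mul hx.le, Real.sqrt_eq_rpow, ← Real.rpow_add hx]
    congr 1
    push_cast
    ring
  have hl := Real.sqrt_pos.2 ht.1
  rw [weightedJacobi, jacobiWeight, mul_pow, mul_pow, hpow a ht.1, hpow b ht',
    Real.sqrt_mul ht.1.le, jacobiWeight]
  field_simp

theorem isLiouvilleSolution_weightedJacobi {a b : ℝ} (ha : 0 ≤ a) (hb : 0 ≤ b) (n : ℕ) :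
    IsLiouvilleSolution (jacobiPotential a b n) (weightedJacobi a b n)
      (weightedJacobiFlux a b n) where
  continuousOn := ((continuous_jacobiWeight (by positivity) (by positivity)).mul
    (differentiable_unitJacobi a b n).continuous).continuousOn
  map_zero := by rw [weightedJacobi, jacobiWeight_zero (by positivity), zero_mul]
  map_one := by rw [weightedJacobi, jacobiWeight_one _ (by positivity), zero_mul]
  hasDerivAt t ht := by
    refine ((hasDerivAt_jacobiWeight _ _ ht).fun_mul
      (differentiable_unitJacobi a b n t).hasDerivAt).congr_deriv ?_
    have := ht.1.ne'
    have := (sub_pos.2 ht.2).ne'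
    unfold weightedJacobiFlux
    field_simp
    ring
  hasDerivAt_flux t ht := by
    have hid := hasDerivAt_id' t
    have hP := (differentiable_unitJacobi a b n t).hasDerivAt
    have hP' := (differentiable_deriv_unitJacobi a b n t).hasDerivAt
    have hode := unitJacobi_differential_equation a b n t
    refine ((hasDerivAt_jacobiWeight _ _ ht).fun_mul
      (((hid.fun_mul (hid.const_sub 1)).fun_mul hP').fun_add
        ((((hid.const_sub 1).const_mul _).fun_sub (hid.const_mul _)).fun_mul hP))).congr_deriv ?_
    have := ht.1.ne'
    have := (sub_pos.2 ht.2).ne'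
    unfold weightedJacobiFlux weightedJacobi jacobiPotential jacobiFreq
    generalize jacobiWeight (a / 2 + 1 / 4) (b / 2 + 1 / 4) t = W
    field_simp
    linear_combination (64 * W * (t * (1 - t))) * hode
  intervalIntegrable :=
    ((continuous_jacobiWeight_mul_sq ha hb n).intervalIntegrable 0 1).congr_uIoo
      fun t ht => (weightedJacobi_sq_div_sqrt a b n (by rwa [uIoo_of_le zero_le_one] at ht)).symm

theorem liouvilleMass_weightedJacobi {a b : ℝ} (ha : 0 ≤ a) (hb : 0 ≤ b) (n : ℕ) :
    liouvilleMass (weightedJacobi a b n) = unitJacobiNormSq a b n := by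
  rw [← integral_unitJacobi_sq ha hb]
  exact intervalIntegral.integral_congr_uIoo fun t ht =>
    weightedJacobi_sq_div_sqrt a b n (by rwa [uIoo_of_le zero_le_one] at ht)

/-- The zeros of `jacobiPotential a b n` are `t₁` and `t₁ + 2 * w`, expressed through the values
of the potential at the two endpoints, and they lie inside the unit interval. -/
structure IsJacobiTurning (a b n t₁ w : ℝ) : Prop extends IsTurningInterval t₁ w where
  left_eq : jacobiFreq a b n ^ 2 * (t₁ * (t₁ + 2 * w)) = (a ^ 2 - 1 / 4) / 4
  right_eq : jacobiFreq a b n ^ 2 * ((1 - t₁) * (1 - (t₁ + 2 * w))) = (b ^ 2 - 1 / 4) / 4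

/-- The discriminant of `jacobiPotential a b n`, as a quadratic polynomial in `t`. -/
noncomputable def jacobiDiscrim (a b n : ℝ) : ℝ :=
  (jacobiFreq a b n ^ 2 + (a ^ 2 - b ^ 2) / 4) ^ 2 -
    jacobiFreq a b n ^ 2 * (a ^ 2 - 1 / 4)

section Jacobi

variable {a b n : ℝ}

theorem mul_le_jacobiDiscrim (ha : 1 / 2 ≤ a) (hb : 1 / 2 ≤ b) (hn : 0 ≤ n) :
    n * (n + a) * (n + b) * (n + a + b) ≤ jacobiDiscrim a b n := by
  have hlo : n * (n + a + b) ≤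
      jacobiFreq a b n ^ 2 - (a ^ 2 - 1 / 4) / 4 - (b ^ 2 - 1 / 4) / 4 - a * b / 2 := by
    unfold jacobiFreq
    linarith
  have hhi : (n + a) * (n + b) ≤
      jacobiFreq a b n ^ 2 - (a ^ 2 - 1 / 4) / 4 - (b ^ 2 - 1 / 4) / 4 + a * b / 2 := by
    unfold jacobiFreq
    linarith
  have hmul := mul_le_mul hlo hhi (by positivity) (hlo.trans' (by positivity))
  unfold jacobiDiscrim
  nlinarith [sq_nonneg a, sq_nonneg b]

theorem exists_isJacobiTurning (ha : 1 / 2 < a) (hb : 1 / 2 < b) (hn : 0 < n) :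
    ∃ t₁ w, IsJacobiTurning a b n t₁ w := by
  have hd : 0 < jacobiDiscrim a b n :=
    (mul_le_jacobiDiscrim ha.le hb.le hn.le).trans_lt' (by positivity)
  have hN : 0 < jacobiFreq a b n ^ 2 := by
    unfold jacobiFreq
    positivity
  obtain ⟨S, hS, hS2⟩ : ∃ S, 0 < S ∧ S ^ 2 = jacobiDiscrim a b n :=
    ⟨_, Real.sqrt_pos.2 hd, Real.sq_sqrt hd.le⟩
  have hA : 0 < a ^ 2 - 1 / 4 := by nlinarith
  have hB : 0 < b ^ 2 - 1 / 4 := by nlinarith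
  have hNAB : a ^ 2 / 4 + b ^ 2 / 4 < jacobiFreq a b n ^ 2 := by
    unfold jacobiFreq
    nlinarith
  unfold jacobiDiscrim at hS2
  have hSA : S < jacobiFreq a b n ^ 2 + (a ^ 2 - b ^ 2) / 4 :=
    lt_of_pow_lt_pow_left₀ 2 (by linarith) (by nlinarith [mul_pos hN hA])
  have hSB : S < jacobiFreq a b n ^ 2 - (a ^ 2 - b ^ 2) / 4 :=
    lt_of_pow_lt_pow_left₀ 2 (by linarith) (by nlinarith [mul_pos hN hB])
  refine ⟨(jacobiFreq a b n ^ 2 + (a ^ 2 - b ^ 2) / 4 - S) / (2 * jacobiFreq a b n ^ 2),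
    S / (2 * jacobiFreq a b n ^ 2),
    ⟨div_pos (sub_pos.2 hSA) (by positivity), by positivity, ?_⟩, ?_, ?_⟩ <;>
    generalize jacobiFreq a b n ^ 2 = N at *
  · field_simp
    linarith
  · field_simp
    linear_combination -16 * hS2
  · field_simp
    linear_combination -16 * hS2

namespace IsJacobiTurning

variable {t₁ w : ℝ}

theorem jacobiPotential_eq (h : IsJacobiTurning a b n t₁ w) :
    jacobiPotential a b n = edgePotential (jacobiFreq a b n) t₁ w := by
  funext t
  unfold jacobiPotential edgePotential
  linear_combination (1 - t) * h.left_eq + t * h.right_eq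

theorem reflect (h : IsJacobiTurning a b n t₁ w) :
    IsJacobiTurning b a n (1 - t₁ - 2 * w) w where
  toIsTurningInterval := h.toIsTurningInterval.reflect
  left_eq := by
    rw [jacobiFreq_comm, ← h.right_eq]
    ring
  right_eq := by
    rw [jacobiFreq_comm, ← h.left_eq]
    ring

theorem two_mul_mid (h : IsJacobiTurning a b n t₁ w) :
    2 * jacobiFreq a b n ^ 2 * (t₁ + w) = jacobiFreq a b n ^ 2 + (a ^ 2 - b ^ 2) / 4 := by
  linear_combination h.left_eq - h.right_eq

theorem four_mul_width_sq (h : IsJacobiTurning a b n t₁ w) :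
    4 * jacobiFreq a b n ^ 4 * w ^ 2 = jacobiDiscrim a b n := by
  unfold jacobiDiscrim
  rw [← h.two_mul_mid]
  linear_combination (-4 * jacobiFreq a b n ^ 2) * h.left_eq

theorem le_mid (h : IsJacobiTurning a b n t₁ w) (ha : 0 ≤ a) (hb : 0 ≤ b)
    (hn : 0 ≤ n) :
    (n + a) * (n + a + b) ≤ 4 * jacobiFreq a b n ^ 2 * (t₁ + w) := by
  have := h.two_mul_mid
  unfold jacobiFreq at this ⊢
  nlinarith

theorem mid_le (h : IsJacobiTurning a b n t₁ w) (ha : 0 ≤ a) (hb : 0 ≤ b)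
    (hn : 1 ≤ n) :
    2 * jacobiFreq a b n ^ 2 * (t₁ + w) ≤ 3 * (n + a) * (n + a + b) := by
  have := h.two_mul_mid
  unfold jacobiFreq at this ⊢
  nlinarith

theorem le_one_sub_mid (h : IsJacobiTurning a b n t₁ w) (ha : 0 ≤ a) (hb : 0 ≤ b)
    (hn : 0 ≤ n) :
    (n + b) * (n + a + b) ≤ 4 * jacobiFreq a b n ^ 2 * (1 - (t₁ + w)) := by
  have := h.reflect.le_mid hb ha hn
  rw [jacobiFreq_comm] at this
  linarith

theorem one_sub_mid_le (h : IsJacobiTurning a b n t₁ w) (ha : 0 ≤ a) (hb : 0 ≤ b)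
    (hn : 1 ≤ n) :
    2 * jacobiFreq a b n ^ 2 * (1 - (t₁ + w)) ≤ 3 * (n + b) * (n + a + b) := by
  have := h.reflect.mid_le hb ha hn
  rw [jacobiFreq_comm] at this
  linarith

theorem le_width_sq (h : IsJacobiTurning a b n t₁ w) (ha : 1 / 2 ≤ a) (hb : 1 / 2 ≤ b)
    (hn : 0 < n) :
    n * (n + a) * (n + b) ≤ 4 * (n + a + b) ^ 3 * w ^ 2 := by
  have hd := mul_le_jacobiDiscrim ha hb hn.le
  rw [← h.four_mul_width_sq] at hd
  have hN : jacobiFreq a b n ^ 4 ≤ (n + a + b) ^ 4 :=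
    pow_le_pow_left₀ (by unfold jacobiFreq; positivity) (by unfold jacobiFreq; linarith) 4
  refine le_of_mul_le_mul_right (hd.trans ?_) (by positivity : 0 < n + a + b)
  linarith [mul_le_mul_of_nonneg_right hN (sq_nonneg w)]

theorem mid_sq_le_width_pow (h : IsJacobiTurning a b n t₁ w) (ha : 1 / 2 ≤ a) (hb : 1 / 2 ≤ b)
    (hn : 1 ≤ n) :
    (n / 18) ^ 2 * ((t₁ + w) * (1 - (t₁ + w))) ^ 2 ≤ jacobiFreq a b n ^ 2 * w ^ 4 := by
  have hd := mul_le_jacobiDiscrim ha hb (zero_le_one.trans hn)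
  rw [← h.four_mul_width_sq] at hd
  have ha₀ : 0 ≤ a := one_half_pos.le.trans ha
  have hb₀ : 0 ≤ b := one_half_pos.le.trans hb
  have hmid := mul_le_mul (h.mid_le ha₀ hb₀ hn) (h.one_sub_mid_le ha₀ hb₀ hn)
    (mul_nonneg (by positivity) (sub_nonneg.2 h.mid_mem.2.le)) (by positivity)
  have hN : 0 < jacobiFreq a b n := by
    unfold jacobiFreq
    positivity
  have hN2 : n + a + b ≤ 2 * jacobiFreq a b n := by
    unfold jacobiFreq
    linarith
  have hm : 0 ≤ (t₁ + w) * (1 - (t₁ + w)) := (mul_one_sub_pos h.mid_mem).le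
  rw [← mul_pow, show jacobiFreq a b n ^ 2 * w ^ 4 = (jacobiFreq a b n * w ^ 2) ^ 2 by ring]
  refine pow_le_pow_left₀ (by positivity) ?_ 2
  refine le_of_mul_le_mul_left ?_ (by positivity : 0 < 8 * jacobiFreq a b n ^ 4)
  calc 8 * jacobiFreq a b n ^ 4 * (n / 18 * ((t₁ + w) * (1 - (t₁ + w))))
      = n / 9 * (2 * jacobiFreq a b n ^ 2 * (t₁ + w) *
          (2 * jacobiFreq a b n ^ 2 * (1 - (t₁ + w)))) := by ring
    _ ≤ n / 9 * (3 * (n + a) * (n + a + b) * (3 * (n + b) * (n + a + b))) := by gcongr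
    _ = n * (n + a) * (n + b) * (n + a + b) * (n + a + b) := by ring
    _ ≤ 4 * jacobiFreq a b n ^ 4 * w ^ 2 * (2 * jacobiFreq a b n) := by gcongr
    _ = 8 * jacobiFreq a b n ^ 4 * (jacobiFreq a b n * w ^ 2) := by ring

theorem endpoint_mul_width_le (h : IsJacobiTurning a b n t₁ w) (ha : 1 / 2 ≤ a) (hb : 0 ≤ b)
    (hn : 1 ≤ n) :
    (a ^ 2 - 1 / 4) / 4 * (n + b) * w ≤
      12 * (n + a) * (jacobiFreq a b n ^ 2 * w * (t₁ * (1 - t₁))) := by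
  have ha₀ : 0 ≤ a := one_half_pos.le.trans ha
  have hA : 0 ≤ (a ^ 2 - 1 / 4) / 4 := by nlinarith
  have hw := h.width_pos
  have ht₁ := mul_one_sub_pos h.left_mem
  have hlo : (n + b) * (n + a + b) ≤ 4 * jacobiFreq a b n ^ 2 * (1 - t₁) := by
    refine (h.le_one_sub_mid ha₀ hb (by linarith)).trans ?_
    gcongr
    linarith
  have hhi : jacobiFreq a b n ^ 2 * (t₁ + 2 * w) ≤ 3 * (n + a) * (n + a + b) := by
    refine le_trans ?_ (h.mid_le ha₀ hb hn)
    linarith [mul_nonneg (sq_nonneg (jacobiFreq a b n)) h.left_pos.le]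
  refine le_of_mul_le_mul_right ?_ (by positivity : 0 < n + a + b)
  calc (a ^ 2 - 1 / 4) / 4 * (n + b) * w * (n + a + b)
      = (a ^ 2 - 1 / 4) / 4 * ((n + b) * (n + a + b)) * w := by ring
    _ ≤ (a ^ 2 - 1 / 4) / 4 * (4 * jacobiFreq a b n ^ 2 * (1 - t₁)) * w := by gcongr
    _ = 4 * (jacobiFreq a b n ^ 2 * w * (t₁ * (1 - t₁))) *
          (jacobiFreq a b n ^ 2 * (t₁ + 2 * w)) := by rw [← h.left_eq]; ring
    _ ≤ 4 * (jacobiFreq a b n ^ 2 * w * (t₁ * (1 - t₁))) * (3 * (n + a) * (n + a + b)) := by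
      gcongr
    _ = 12 * (n + a) * (jacobiFreq a b n ^ 2 * w * (t₁ * (1 - t₁))) * (n + a + b) := by ring

theorem le_freq_sq_mul_width {κ : ℝ} (h : IsJacobiTurning a b n t₁ w) (hκ : 0 < κ)
    (hκa : κ * a ^ 2 ≤ (a ^ 2 - 1 / 4) / 4) (ha : 1 / 2 ≤ a) (hb : 1 / 2 ≤ b) (hn : 1 ≤ n) :
    κ / 216 ≤ jacobiFreq a b n ^ 2 * w * (t₁ * (1 - t₁)) := by
  have hw := h.width_pos
  have hT := mul_one_sub_pos h.left_mem
  have hX : κ * a ^ 2 * (n + b) * w ≤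
      12 * (n + a) * (jacobiFreq a b n ^ 2 * w * (t₁ * (1 - t₁))) :=
    (h.endpoint_mul_width_le ha (one_half_pos.le.trans hb) hn).trans' (by gcongr)
  have hX₀ : 0 ≤ jacobiFreq a b n ^ 2 * w * (t₁ * (1 - t₁)) := by positivity
  generalize jacobiFreq a b n ^ 2 * w * (t₁ * (1 - t₁)) = X at *
  have hsum : n + a + b ≤ 3 * a * (n + b) := by nlinarith
  have hna : n + a ≤ 3 * a * n := by nlinarith
  have hwidth : n * (n + a) ≤ 108 * a ^ 3 * (n + b) ^ 2 * w ^ 2 := by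
    refine le_of_mul_le_mul_right ?_ (by positivity : 0 < n + b)
    calc n * (n + a) * (n + b) ≤ 4 * (n + a + b) ^ 3 * w ^ 2 :=
          h.le_width_sq ha hb (zero_lt_one.trans_le hn)
      _ ≤ 4 * (3 * a * (n + b)) ^ 3 * w ^ 2 := by gcongr
      _ = 108 * a ^ 3 * (n + b) ^ 2 * w ^ 2 * (n + b) := by ring
  have hsq : κ ^ 2 ≤ (216 * X) ^ 2 := by
    refine le_of_mul_le_mul_right ?_ (by positivity : 0 < a * n * (n + a))
    calc κ ^ 2 * (a * n * (n + a)) = κ ^ 2 * a * (n * (n + a)) := by ring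
      _ ≤ κ ^ 2 * a * (108 * a ^ 3 * (n + b) ^ 2 * w ^ 2) := by gcongr
      _ = 108 * (κ * a ^ 2 * (n + b) * w) ^ 2 := by ring
      _ ≤ 108 * (12 * (n + a) * X) ^ 2 := by gcongr
      _ = 15552 * X ^ 2 * (n + a) * (n + a) := by ring
      _ ≤ 15552 * X ^ 2 * (n + a) * (3 * a * n) := by gcongr
      _ = (216 * X) ^ 2 * (a * n * (n + a)) := by ring
  linarith [le_of_pow_le_pow_left₀ two_ne_zero (by positivity) hsq]

theorem freq_sq_mul_le (h : IsJacobiTurning a b n t₁ w) (ha : 0 ≤ a) (hb : 0 ≤ b) (hn : 1 ≤ n) :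
    jacobiFreq a b n ^ 2 * (t₁ * (1 - t₁)) * (n + a) ≤ 3 * a ^ 2 * (n + b) := by
  have hw := h.width_pos
  have ht₁ := h.left_pos
  have hN := sq_nonneg (jacobiFreq a b n)
  have hright : jacobiFreq a b n ^ 2 * (1 - t₁) ≤ 3 * (n + b) * (n + a + b) := by
    refine le_trans ?_ (h.one_sub_mid_le ha hb hn)
    linarith [mul_nonneg hN (sub_nonneg.2 h.right_lt_one.le)]
  have hmid : (n + a) * (n + a + b) ≤ 4 * (jacobiFreq a b n ^ 2 * (t₁ + 2 * w)) := by
    refine (h.le_mid ha hb (by linarith)).trans ?_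
    linarith [mul_nonneg hN hw.le]
  have hleft : t₁ * ((n + a) * (n + a + b)) ≤ a ^ 2 := by
    linarith [mul_le_mul_of_nonneg_left hmid ht₁.le, h.left_eq]
  calc jacobiFreq a b n ^ 2 * (t₁ * (1 - t₁)) * (n + a)
      = t₁ * (n + a) * (jacobiFreq a b n ^ 2 * (1 - t₁)) := by ring
    _ ≤ t₁ * (n + a) * (3 * (n + b) * (n + a + b)) := by gcongr
    _ = 3 * (n + b) * (t₁ * ((n + a) * (n + a + b))) := by ring
    _ ≤ 3 * (n + b) * a ^ 2 := by gcongr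
    _ = 3 * a ^ 2 * (n + b) := by ring

theorem freq_sq_div_width_sq_le {M : ℝ} (h : IsJacobiTurning a b n t₁ w) (ha : 1 / 2 ≤ a)
    (hb : 1 / 2 ≤ b) (hn : 1 ≤ n) (haM : a ≤ M) (hbM : b ≤ M) :
    jacobiFreq a b n ^ 2 * (t₁ * (1 - t₁)) / w ^ 2 ≤ 96 * (M ^ 2 * (1 + M / n)) := by
  have ha₀ : 0 ≤ a := one_half_pos.le.trans ha
  have hb₀ : 0 ≤ b := one_half_pos.le.trans hb
  have hn₀ : 0 < n := zero_lt_one.trans_le hn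
  have hw := h.width_pos
  have hfreq := h.freq_sq_mul_le ha₀ hb₀ hn
  have hwidth := h.le_width_sq ha hb hn₀
  have hsum : a * (n + a + b) ≤ 2 * M * (n + a) := by nlinarith
  have hM : n + a + b ≤ 2 * (1 + M / n) * n := by
    have : (1 + M / n) * n = n + M := by field_simp
    linarith
  rw [div_le_iff₀ (by positivity)]
  refine le_of_mul_le_mul_left ?_ (by positivity : 0 < n * (n + a) ^ 2)
  calc n * (n + a) ^ 2 * (jacobiFreq a b n ^ 2 * (t₁ * (1 - t₁)))
      = n * (n + a) * (jacobiFreq a b n ^ 2 * (t₁ * (1 - t₁)) * (n + a)) := by ring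
    _ ≤ n * (n + a) * (3 * a ^ 2 * (n + b)) := by gcongr
    _ = 3 * a ^ 2 * (n * (n + a) * (n + b)) := by ring
    _ ≤ 3 * a ^ 2 * (4 * (n + a + b) ^ 3 * w ^ 2) := by gcongr
    _ = 12 * w ^ 2 * ((a * (n + a + b)) ^ 2 * (n + a + b)) := by ring
    _ ≤ 12 * w ^ 2 * ((2 * M * (n + a)) ^ 2 * (2 * (1 + M / n) * n)) := by gcongr
    _ = n * (n + a) ^ 2 * (96 * (M ^ 2 * (1 + M / n)) * w ^ 2) := by ring

end IsJacobiTurning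

/-- The constant in the estimate of solutions of the Jacobi equation at the turning points. Here
`κ` is the bound in `IsJacobiTurning.le_freq_sq_mul_width` and `A` is the parameter in
`IsLiouvilleSolution.twelfth_power_le`. -/
noncomputable def jacobiEdgeConst (κ A : ℝ) : ℝ :=
  24576 * (41 * Real.exp (4 * √A)) ^ 6 * (1 / A + 216 / κ)

theorem jacobiEdgeConst_pos {κ A : ℝ} (hκ : 0 < κ) (hA : 0 < A) : 0 < jacobiEdgeConst κ A := by
  unfold jacobiEdgeConst
  positivity

theorem edgePotential_nonpos {N t₁ w t : ℝ} (hw : 0 ≤ w) (ht : t ≤ t₁) :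
    edgePotential N t₁ w t ≤ 0 :=
  mul_nonpos_of_nonpos_of_nonneg
    (mul_nonpos_of_nonneg_of_nonpos (sq_nonneg N) (sub_nonpos.2 ht)) (by linarith)

theorem jacobiPotential_reflect (a b n : ℝ) :
    (fun t => jacobiPotential a b n (1 - t)) = jacobiPotential b a n := by
  funext t
  rw [jacobiPotential, jacobiPotential, jacobiFreq_comm]
  ring

theorem jacobiPotential_le {t : ℝ} (ha : 1 / 2 ≤ a) (hb : 1 / 2 ≤ b) (ht : t ∈ Icc 0 1) :
    jacobiPotential a b n t ≤ (n + 1) * (n + a + b) * (t * (1 - t)) := by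
  unfold jacobiPotential jacobiFreq
  linarith [sq_nonneg ((a - 1 / 2) * (1 - t) - (b - 1 / 2) * t),
    mul_nonneg (sub_nonneg.2 ha) (sub_nonneg.2 ht.2), mul_nonneg (sub_nonneg.2 hb) ht.1]

namespace IsJacobiTurning

variable {t₁ w t₀ κ A M : ℝ} {v y : ℝ → ℝ}

theorem jacobiPotential_nonpos {t : ℝ} (h : IsJacobiTurning a b n t₁ w) (ht : t ≤ t₁) :
    jacobiPotential a b n t ≤ 0 := by
  rw [h.jacobiPotential_eq]
  exact edgePotential_nonpos h.width_pos.le ht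

theorem critical_twelfth_power_le_of_le (h : IsJacobiTurning a b n t₁ w)
    (hv : IsLiouvilleSolution (jacobiPotential a b n) v y)
    (hκ : 0 < κ) (hκa : κ * a ^ 2 ≤ (a ^ 2 - 1 / 4) / 4)
    (ha : 1 / 2 ≤ a) (hb : 1 / 2 ≤ b) (hn : 1 ≤ n) (haM : a ≤ M) (hbM : b ≤ M)
    (hA : 4 ≤ A) (hκA : 512 ≤ A * (κ / 216) ^ 2) (hnA : 172 + 4 * A ≤ (n / 18) ^ 2)
    (ht₀ : t₀ ∈ Ioo 0 1) (hc : v t₀ * y t₀ = 0) (ht₀w : t₀ ≤ t₁ + w) :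
    v t₀ ^ 12 ≤ jacobiEdgeConst κ A * (M ^ 2 * (1 + M / n)) * liouvilleMass v ^ 6 := by
  have hmass := liouvilleMass_nonneg v
  rcases le_total t₀ t₁ with hle | hle
  · have hzero : v t₀ = 0 := hv.eq_zero_of_mul_flux_nonpos
      (fun t ht => h.jacobiPotential_nonpos (ht.2.le.trans hle)) ht₀ hc.le
    have hM : 0 < M := by linarith
    have hC := jacobiEdgeConst_pos hκ (by linarith : 0 < A)
    rw [hzero, zero_pow (by norm_num)]
    positivity
  · have hN : (172 + 4 * A) * ((t₁ + w) * (1 - (t₁ + w))) ^ 2 ≤ jacobiFreq a b n ^ 2 * w ^ 4 :=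
      (mul_le_mul_of_nonneg_right hnA (sq_nonneg _)).trans (h.mid_sq_le_width_pow ha hb hn)
    rw [h.jacobiPotential_eq] at hv
    calc v t₀ ^ 12
        ≤ 256 * (41 * Real.exp (4 * √A)) ^ 6 * (1 / A + 1 / (κ / 216)) *
            (jacobiFreq a b n ^ 2 * (t₁ * (1 - t₁)) / w ^ 2) * liouvilleMass v ^ 6 :=
          hv.twelfth_power_le h.toIsTurningInterval (by positivity)
            (h.le_freq_sq_mul_width hκ hκa ha hb hn) hA hκA hN ⟨hle, ht₀w⟩
      _ ≤ 256 * (41 * Real.exp (4 * √A)) ^ 6 * (1 / A + 1 / (κ / 216)) *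
            (96 * (M ^ 2 * (1 + M / n))) * liouvilleMass v ^ 6 := by
          gcongr
          exact h.freq_sq_div_width_sq_le ha hb hn haM hbM
      _ = jacobiEdgeConst κ A * (M ^ 2 * (1 + M / n)) * liouvilleMass v ^ 6 := by
          rw [one_div_div, jacobiEdgeConst]
          ring

theorem critical_twelfth_power_le (h : IsJacobiTurning a b n t₁ w)
    (hv : IsLiouvilleSolution (jacobiPotential a b n) v y)
    (hκ : 0 < κ) (hκa : κ * a ^ 2 ≤ (a ^ 2 - 1 / 4) / 4) (hκb : κ * b ^ 2 ≤ (b ^ 2 - 1 / 4) / 4)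
    (ha : 1 / 2 ≤ a) (hb : 1 / 2 ≤ b) (hn : 1 ≤ n) (haM : a ≤ M) (hbM : b ≤ M)
    (hA : 4 ≤ A) (hκA : 512 ≤ A * (κ / 216) ^ 2) (hnA : 172 + 4 * A ≤ (n / 18) ^ 2)
    (ht₀ : t₀ ∈ Ioo 0 1) (hc : v t₀ * y t₀ = 0) :
    v t₀ ^ 12 ≤ jacobiEdgeConst κ A * (M ^ 2 * (1 + M / n)) * liouvilleMass v ^ 6 := by
  rcases le_total t₀ (t₁ + w) with hle | hle
  · exact h.critical_twelfth_power_le_of_le hv hκ hκa ha hb hn haM hbM hA hκA hnA ht₀ hc hle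
  · have hvr := hv.reflect
    rw [jacobiPotential_reflect] at hvr
    have hbound := h.reflect.critical_twelfth_power_le_of_le (t₀ := 1 - t₀) hvr hκ hκb hb ha hn
      hbM haM hA hκA hnA ⟨by linarith [ht₀.2], by linarith [ht₀.1]⟩
      (by rw [sub_sub_cancel, mul_neg, hc, neg_zero]) (by linarith)
    rwa [sub_sub_cancel, liouvilleMass_reflect] at hbound

theorem critical_twelfth_power_le_pow_seven (h : IsJacobiTurning a b n t₁ w)
    (hv : IsLiouvilleSolution (jacobiPotential a b n) v y)
    (ha : 1 / 2 ≤ a) (hb : 1 / 2 ≤ b) (hn : 1 ≤ n) (haM : a ≤ M) (hbM : b ≤ M)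
    (ht₀ : t₀ ∈ Ioo 0 1) (hc : v t₀ * y t₀ = 0) :
    v t₀ ^ 12 ≤ 32768 * n ^ 7 * (M ^ 2 * (1 + M / n)) * liouvilleMass v ^ 6 := by
  have hM : 0 < M := by linarith
  have hΦ : 0 < (n + 1) * (n + a + b) := by positivity
  have hsq : v t₀ ^ 2 ≤ 2 * √((n + 1) * (n + a + b)) * liouvilleMass v :=
    hv.sq_le_of_potential_le (Real.sqrt_pos.2 hΦ)
      (fun t ht => by
        rw [Real.sq_sqrt hΦ.le]
        exact jacobiPotential_le ha hb (Ioo_subset_Icc_self ht))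
      h.left_pos (fun t ht => h.jacobiPotential_nonpos ht.2.le) ht₀ hc
  have hΦM : (n + 1) * (n + a + b) ≤ 2 * n * (4 * n * M) :=
    mul_le_mul (by linarith) (by nlinarith) (by positivity) (by positivity)
  calc v t₀ ^ 12 = (v t₀ ^ 2) ^ 6 := by ring
    _ ≤ (2 * √((n + 1) * (n + a + b)) * liouvilleMass v) ^ 6 := by gcongr
    _ = 64 * (√((n + 1) * (n + a + b)) ^ 2) ^ 3 * liouvilleMass v ^ 6 := by ring
    _ ≤ 64 * (2 * n * (4 * n * M)) ^ 3 * liouvilleMass v ^ 6 := by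
      rw [Real.sq_sqrt hΦ.le]
      have := liouvilleMass_nonneg v
      gcongr
    _ = 32768 * n ^ 7 * (M ^ 2 * (M / n)) * liouvilleMass v ^ 6 := by field
    _ ≤ 32768 * n ^ 7 * (M ^ 2 * (1 + M / n)) * liouvilleMass v ^ 6 := by
      have := liouvilleMass_nonneg v
      gcongr
      linarith

end IsJacobiTurning

end Jacobi

theorem exists_forall_mul_sq_le {β₀ : ℝ} (hβ₀ : 1 / 2 < β₀) :
    ∃ κ : ℝ, 0 < κ ∧ ∀ a, β₀ ≤ a → κ * a ^ 2 ≤ (a ^ 2 - 1 / 4) / 4 := by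
  refine ⟨(1 - 1 / (4 * β₀ ^ 2)) / 4, ?_, fun a ha => ?_⟩
  · refine div_pos (sub_pos.2 ?_) four_pos
    rw [div_lt_one (by positivity)]
    nlinarith
  · have : 1 ≤ a ^ 2 / β₀ ^ 2 := (one_le_div (by positivity)).2 (by gcongr)
    linear_combination this / 16

theorem exists_forall_twelfth_power_le {β₀ : ℝ} (hβ₀ : 1 / 2 < β₀) :
    ∃ C : ℝ, 0 < C ∧ ∀ (a b n M t : ℝ) (v y : ℝ → ℝ), β₀ ≤ a → β₀ ≤ b → 1 ≤ n → a ≤ M → b ≤ M →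
      IsLiouvilleSolution (jacobiPotential a b n) v y → t ∈ Icc 0 1 →
        v t ^ 12 ≤ C * (M ^ 2 * (1 + M / n)) * liouvilleMass v ^ 6 := by
  obtain ⟨κ, hκ, hκle⟩ := exists_forall_mul_sq_le hβ₀
  set A := 4 + 512 / (κ / 216) ^ 2
  have hA : 4 ≤ A := le_add_of_nonneg_right (by positivity)
  have hκA : 512 ≤ A * (κ / 216) ^ 2 := by
    rw [add_mul, div_mul_cancel₀ _ (by positivity)]
    exact le_add_of_nonneg_left (by positivity)
  have hC := jacobiEdgeConst_pos hκ (by linarith : 0 < A)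
  refine ⟨jacobiEdgeConst κ A + 32768 * (18 * (172 + 4 * A)) ^ 7, by positivity,
    fun a b n M t v y ha hb hn haM hbM hv ht => ?_⟩
  obtain ⟨t₁, w, h⟩ := exists_isJacobiTurning (hβ₀.trans_le ha) (hβ₀.trans_le hb)
    (zero_lt_one.trans_le hn)
  obtain ⟨t₀, ht₀, hc, hmax⟩ := hv.exists_forall_sq_le
  have := liouvilleMass_nonneg v
  have ha₂ := (hβ₀.trans_le ha).le
  have hb₂ := (hβ₀.trans_le hb).le
  have hM : 0 < M := by linarith
  calc v t ^ 12 = (v t ^ 2) ^ 6 := by ring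
    _ ≤ (v t₀ ^ 2) ^ 6 := pow_le_pow_left₀ (sq_nonneg _) (hmax t ht) 6
    _ = v t₀ ^ 12 := by ring
    _ ≤ _ := ?_
  rcases le_total (18 * (172 + 4 * A)) n with hlarge | hsmall
  · have hnA : 172 + 4 * A ≤ (n / 18) ^ 2 := by nlinarith
    refine (h.critical_twelfth_power_le hv hκ (hκle a ha) (hκle b hb) ha₂ hb₂ hn haM hbM hA hκA hnA
      ht₀ hc).trans ?_
    gcongr
    exact le_add_of_nonneg_right (by positivity)
  · refine (h.critical_twelfth_power_le_pow_seven hv ha₂ hb₂ hn haM hbM ht₀ hc).trans ?_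
    gcongr
    exact le_add_of_nonneg_of_le hC.le (by gcongr)

theorem abs_le_mul_rpow_of_twelfth_power_le {C M q H u : ℝ} (hC : 0 ≤ C) (hM : 0 ≤ M) (hq : 0 ≤ q)
    (hH : 0 ≤ H) (h : u ^ 12 ≤ C * (M ^ 2 * q) * H ^ 6) :
    |u| ≤ C ^ ((1 : ℝ) / 12) * M ^ ((1 : ℝ) / 6) * q ^ ((1 : ℝ) / 12) * H ^ ((1 : ℝ) / 2) := by
  have hroot : ∀ {x : ℝ} (p : ℝ) (k : ℕ), 0 ≤ x → p * 12 = k → (x ^ p) ^ 12 = x ^ k := by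
    intro x p k hx hp
    rw [← Real.rpow_mul_natCast hx, Nat.cast_ofNat, hp, Real.rpow_natCast]
  refine le_of_pow_le_pow_left₀ (n := 12) (by norm_num) (by positivity) ?_
  rw [Even.pow_abs (by decide), mul_pow, mul_pow, mul_pow, hroot _ 1 hC (by norm_num),
    hroot _ 2 hM (by norm_num), hroot _ 1 hq (by norm_num), hroot _ 6 hH (by norm_num)]
  exact h.trans_eq (by ring)

theorem stmt7_general {β₀ : ℝ} (hβ₀ : 1 / 2 < β₀) :
    ∃ C : ℝ, 0 < C ∧
      ∀ (α β : ℝ), β₀ ≤ α → β₀ ≤ β → ∀ (n : ℕ), 1 ≤ n →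
        ∀ x ∈ Set.Icc (-1 : ℝ) 1,
          ((1 - x) / 2) ^ (α / 2 + 1 / 4) * ((1 + x) / 2) ^ (β / 2 + 1 / 4) * |jacobi α β n x|
            ≤ C * max α β ^ ((1 : ℝ) / 6) * (1 + max α β / (n : ℝ)) ^ ((1 : ℝ) / 12) *
                (Real.Gamma ((n : ℝ) + α + 1) * Real.Gamma ((n : ℝ) + β + 1) /
                    ((2 * (n : ℝ) + α + β + 1) * Real.Gamma ((n : ℝ) + 1) *
                      Real.Gamma ((n : ℝ) + α + β + 1)))
                  ^ ((1 : ℝ) / 2) := by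
  obtain ⟨C, hC, hbound⟩ := exists_forall_twelfth_power_le hβ₀
  refine ⟨C ^ ((1 : ℝ) / 12), by positivity, fun α β hα hβ n hn x hx => ?_⟩
  have hα_nonneg : 0 ≤ α := by linarith
  have hβ_nonneg : 0 ≤ β := by linarith
  have hM : 0 ≤ max α β := le_max_of_le_left hα_nonneg
  have hx₀ : 0 ≤ (1 - x) / 2 := by linarith [hx.2]
  have hx₁ : 0 ≤ (1 + x) / 2 := by linarith [hx.1]
  have hv : weightedJacobi α β n ((1 - x) / 2) =
      ((1 - x) / 2) ^ (α / 2 + 1 / 4) * ((1 + x) / 2) ^ (β / 2 + 1 / 4) * jacobi α β n x := by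
    rw [weightedJacobi, jacobiWeight, jacobi_eq_unitJacobi,
      show 1 - (1 - x) / 2 = (1 + x) / 2 by ring]
  have hpow := hbound α β n (max α β) ((1 - x) / 2) _ _ hα hβ (by exact_mod_cast hn)
    (le_max_left α β) (le_max_right α β) (isLiouvilleSolution_weightedJacobi hα_nonneg hβ_nonneg n)
    ⟨hx₀, by linarith⟩
  rw [liouvilleMass_weightedJacobi hα_nonneg hβ_nonneg, hv] at hpow
  have habs := abs_le_mul_rpow_of_twelfth_power_le hC.le hM (by positivity)
    (unitJacobiNormSq_nonneg hα_nonneg hβ_nonneg n) hpow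
  rwa [abs_mul, abs_of_nonneg (by positivity)] at habs

theorem stmt7 :
    ∃ C : ℝ, 0 < C ∧
      ∀ (α β : ℝ), β ≤ α → (1 + Real.sqrt 2) / 4 ≤ β → ∀ (n : ℕ), 6 ≤ n →
        ∀ x ∈ Set.Icc (-1 : ℝ) 1,
          ((1 - x) / 2) ^ (α / 2 + 1 / 4) * ((1 + x) / 2) ^ (β / 2 + 1 / 4) * |jacobi α β n x|
            ≤ C * α ^ ((1 : ℝ) / 6) * (1 + α / (n : ℝ)) ^ ((1 : ℝ) / 12) *
                (Real.Gamma ((n : ℝ) + α + 1) * Real.Gamma ((n : ℝ) + β + 1) /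
                    ((2 * (n : ℝ) + α + β + 1) * Real.Gamma ((n : ℝ) + 1) *
                      Real.Gamma ((n : ℝ) + α + β + 1)))
                  ^ ((1 : ℝ) / 2) := by
  obtain ⟨C, hC, h⟩ := stmt7_general (β₀ := (1 + √2) / 4) (by linarith [Real.one_lt_sqrt_two])
  exact ⟨C, hC, fun α β hβα hβ n hn x hx => by
    simpa only [max_eq_left hβα] using h α β (hβ.trans hβα) hβ n (by lia) x hx⟩
end

section
/- Let (X, μ) be a σ-finite measure space, let w : X → (0,∞) be measurable, let N > 1 be real, and let A ≥ 1 and C > 0 be constants. Let T be a bounded linear operator on L²(μ) with operator norm at most A, and suppose that for every f ∈ L²(μ) with ∫ |f|² w dμ < ∞ and ∫ |f|² w^N dμ < ∞ the following two inequalities hold: (i) ∫ |Tf|² dμ ≤ C ∫ |f|² w dμ; (ii) ∫ |Tf|² w^N dμ ≤ A ( C^{1−N} ∫ |f|² w dμ + ∫ |f|² w^N dμ ). Then there exists a constant K, depending only on N and A, such that ∫ |Tf|² w dμ ≤ K ∫ |f|² w dμ for every f ∈ L²(μ) with ∫ |f|² w dμ < ∞ and ∫ |f|² w^N dμ < ∞.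 -/
open MeasureTheory ENNReal

/-!
Let `T : L^p(μ) → L^p(ν)`, with weights `w` on the source and `v` on the target (in (i) and (ii)
these are `p = 2`, `ν = μ` and `v = w`). Put `q = p.toReal` and `W = ∫ ‖f‖ ^ q w dμ`, and integrate
the `‖T f‖ ^ q`-mass of `{t ≤ v}` over `t`. Levels `t ≤ C⁻¹` contribute at most `W` by (i). For
`t > C⁻¹`, split `f` at the level `t` of `w`: on the part where `t ≤ w` use the norm bound of `T`,
on the part where `w < t` use (ii) and Chebyshev's inequality with the weight `v ^ N`. Integrating
over `t` reproduces `W` by the layer cake formula and by `∫_w^∞ t ^ (-N) w ^ N dt = w / (N - 1)`.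
The term `C ^ (1 - N) W` in (ii) is scaled so that, multiplied by `t ^ (-N)`, it too integrates
over `(C⁻¹, ∞)` to `W / (N - 1)`.
-/

section LevelIntegrals

variable {X Y : Type*} [MeasurableSpace X] [MeasurableSpace Y] {N : ℝ}

lemma lintegral_Ioi_ofReal_rpow_neg {c : ℝ} (hN : 1 < N) (hc : 0 < c) :
    ∫⁻ t in Set.Ioi c, ENNReal.ofReal (t ^ (-N)) = ENNReal.ofReal (c ^ (1 - N) / (N - 1)) := by
  have h_nonneg : ∀ᵐ t ∂volume.restrict (Set.Ioi c), 0 ≤ t ^ (-N) := by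
    filter_upwards [ae_restrict_mem measurableSet_Ioi] with t ht
    exact Real.rpow_nonneg (hc.trans ht).le _
  rw [← ofReal_integral_eq_lintegral_ofReal (integrableOn_Ioi_rpow_of_lt (by linarith) hc) h_nonneg,
    integral_Ioi_rpow_of_lt (by linarith) hc, neg_add_eq_sub, neg_div, ← div_neg, neg_sub]

lemma lintegral_mul_setLIntegral_lt {ρ : Measure X} [SFinite ρ] {τ : Measure ℝ} [SFinite τ]
    {w : X → ℝ} (hw : Measurable w) {b : X → ℝ≥0∞} (hb : Measurable b) {φ : ℝ → ℝ≥0∞}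
    (hφ : Measurable φ) :
    ∫⁻ t, φ t * ∫⁻ x in {x | w x < t}, b x ∂ρ ∂τ
      = ∫⁻ x, b x * ∫⁻ t in Set.Ioi (w x), φ t ∂τ ∂ρ := by
  have h_meas : Measurable fun z : ℝ × X ↦ φ z.1 * {x | w x < z.1}.indicator b z.2 :=
    (hφ.comp measurable_fst).mul <| (hb.comp measurable_snd).indicator <|
      measurableSet_lt (hw.comp measurable_snd) measurable_fst
  have h_swap (t : ℝ) (x : X) :
      φ t * {x | w x < t}.indicator b x = b x * (Set.Ioi (w x)).indicator φ t := by
    simp [Set.indicator, mul_comm]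
  calc ∫⁻ t, φ t * ∫⁻ x in {x | w x < t}, b x ∂ρ ∂τ
      = ∫⁻ t, ∫⁻ x, φ t * {x | w x < t}.indicator b x ∂ρ ∂τ := by
        refine lintegral_congr fun t ↦ ?_
        have hs : MeasurableSet {x | w x < t} := measurableSet_lt hw measurable_const
        rw [lintegral_const_mul _ (hb.indicator hs), lintegral_indicator hs]
    _ = ∫⁻ x, ∫⁻ t, φ t * {x | w x < t}.indicator b x ∂τ ∂ρ :=
        lintegral_lintegral_swap h_meas.aemeasurable
    _ = ∫⁻ x, b x * ∫⁻ t in Set.Ioi (w x), φ t ∂τ ∂ρ := by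
        refine lintegral_congr fun x ↦ ?_
        simp_rw [h_swap]
        rw [lintegral_const_mul _ (hφ.indicator measurableSet_Ioi),
          lintegral_indicator measurableSet_Ioi]

lemma lintegral_rpow_neg_mul_setLIntegral_lt_rpow {ρ : Measure X} [SFinite ρ] {w : X → ℝ}
    (hw : Measurable w) (hw_nonneg : ∀ x, 0 ≤ w x) (hN : 1 < N) :
    ∫⁻ t in Set.Ioi (0 : ℝ), ENNReal.ofReal (t ^ (-N)) *
        ∫⁻ x in {x | w x < t}, ENNReal.ofReal (w x ^ N) ∂ρ
      = ENNReal.ofReal (1 / (N - 1)) * ∫⁻ x, ENNReal.ofReal (w x) ∂ρ := by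
  rw [lintegral_mul_setLIntegral_lt hw (by fun_prop) (by fun_prop),
    ← lintegral_const_mul _ (by fun_prop)]
  refine lintegral_congr fun x ↦ ?_
  rw [Measure.restrict_restrict measurableSet_Ioi, Set.Ioi_inter_Ioi, sup_eq_left.2 (hw_nonneg x)]
  rcases (hw_nonneg x).eq_or_lt with hx | hx
  · simp [← hx, Real.zero_rpow (zero_lt_one.trans hN).ne']
  · have := sub_pos.2 hN
    rw [lintegral_Ioi_ofReal_rpow_neg hN hx, ← ofReal_mul (by positivity),
      ← ofReal_mul (by positivity), ← mul_div_assoc, ← Real.rpow_add hx, add_sub_cancel,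
      Real.rpow_one, one_div_mul_eq_div]

lemma measure_ge_le_rpow_neg_mul_lintegral_rpow {σ : Measure Y} {v : Y → ℝ} (hv : Measurable v)
    (hN : 0 ≤ N) {t : ℝ} (ht : 0 < t) :
    σ {y | t ≤ v y} ≤ ENNReal.ofReal (t ^ (-N)) * ∫⁻ y, ENNReal.ofReal (v y ^ N) ∂σ := by
  have h_pos : 0 < t ^ N := Real.rpow_pos_of_pos ht N
  calc σ {y | t ≤ v y}
      ≤ σ {y | ENNReal.ofReal (t ^ N) ≤ ENNReal.ofReal (v y ^ N)} :=
        measure_mono fun y hy ↦ ofReal_le_ofReal (Real.rpow_le_rpow ht.le hy hN)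
    _ ≤ (∫⁻ y, ENNReal.ofReal (v y ^ N) ∂σ) / ENNReal.ofReal (t ^ N) :=
        meas_ge_le_lintegral_div (by fun_prop) (ofReal_pos.2 h_pos).ne' ofReal_ne_top
    _ = ENNReal.ofReal (t ^ (-N)) * ∫⁻ y, ENNReal.ofReal (v y ^ N) ∂σ := by
        rw [ENNReal.div_eq_inv_mul, ← ofReal_inv_of_pos h_pos, Real.rpow_neg ht.le]

variable {ρ : Measure X} {σ : Measure Y} {w : X → ℝ} {v : Y → ℝ} {C : ℝ}

lemma setLIntegral_Ioc_measure_ge_le {M : ℝ≥0∞} (hC : 0 < C)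
    (hσ : σ Set.univ ≤ ENNReal.ofReal C * M) :
    ∫⁻ t in Set.Ioc 0 C⁻¹, σ {y | t ≤ v y} ≤ M := by
  calc ∫⁻ t in Set.Ioc 0 C⁻¹, σ {y | t ≤ v y}
      ≤ ∫⁻ _ in Set.Ioc 0 C⁻¹, ENNReal.ofReal C * M :=
        lintegral_mono fun _ ↦ (measure_mono (Set.subset_univ _)).trans hσ
    _ = ENNReal.ofReal (C * C⁻¹) * M := by
        rw [setLIntegral_const, Real.volume_Ioc, sub_zero, ofReal_mul hC.le]
        ring
    _ = M := by rw [mul_inv_cancel₀ hC.ne', ofReal_one, one_mul]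

lemma setLIntegral_Ioi_measure_ge_le [SFinite ρ] (hw : Measurable w) (hw_nonneg : ∀ x, 0 ≤ w x)
    (hN : 1 < N) (hC : 0 < C) {a b : ℝ≥0∞}
    (h_level : ∀ t > C⁻¹, σ {y | t ≤ v y} ≤ a * ρ {x | t ≤ w x} +
      b * (ENNReal.ofReal (t ^ (-N)) *
        (ENNReal.ofReal (C ^ (1 - N)) * ∫⁻ x, ENNReal.ofReal (w x) ∂ρ +
          ∫⁻ x in {x | w x < t}, ENNReal.ofReal (w x ^ N) ∂ρ))) :
    ∫⁻ t in Set.Ioi C⁻¹, σ {y | t ≤ v y}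
      ≤ (a + b * (2 * ENNReal.ofReal (1 / (N - 1)))) * ∫⁻ x, ENNReal.ofReal (w x) ∂ρ := by
  set W := ∫⁻ x, ENNReal.ofReal (w x) ∂ρ
  have hC_inv : 0 < C⁻¹ := inv_pos.2 hC
  have h_subset : Set.Ioi C⁻¹ ⊆ Set.Ioi (0 : ℝ) := Set.Ioi_subset_Ioi hC_inv.le
  have h_anti : Antitone fun t : ℝ ↦ ρ {x | t ≤ w x} :=
    fun _ _ hst ↦ measure_mono fun _ hx ↦ hst.trans hx
  have h_meas : Measurable fun t : ℝ ↦ ∫⁻ x in {x | w x < t}, ENNReal.ofReal (w x ^ N) ∂ρ :=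
    Monotone.measurable fun _ _ hst ↦ lintegral_mono_set fun _ hx ↦ hx.trans_le hst
  have h_above : ∫⁻ t in Set.Ioi C⁻¹, ρ {x | t ≤ w x} ≤ W :=
    (lintegral_mono_set h_subset).trans_eq
      (lintegral_eq_lintegral_meas_le ρ (.of_forall hw_nonneg) hw.aemeasurable).symm
  have h_const : (∫⁻ t in Set.Ioi C⁻¹, ENNReal.ofReal (t ^ (-N))) *
      (ENNReal.ofReal (C ^ (1 - N)) * W) = ENNReal.ofReal (1 / (N - 1)) * W := by
    rw [lintegral_Ioi_ofReal_rpow_neg hN hC_inv, ← mul_assoc, ← ofReal_mul' (by positivity),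
      Real.inv_rpow hC.le, div_mul_eq_mul_div, inv_mul_cancel₀ (by positivity)]
  have h_below : ∫⁻ t in Set.Ioi C⁻¹, ENNReal.ofReal (t ^ (-N)) *
      ∫⁻ x in {x | w x < t}, ENNReal.ofReal (w x ^ N) ∂ρ ≤ ENNReal.ofReal (1 / (N - 1)) * W :=
    (lintegral_mono_set h_subset).trans_eq
      (lintegral_rpow_neg_mul_setLIntegral_lt_rpow hw hw_nonneg hN)
  have h_sum : ∫⁻ t in Set.Ioi C⁻¹, ENNReal.ofReal (t ^ (-N)) * (ENNReal.ofReal (C ^ (1 - N)) * W +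
      ∫⁻ x in {x | w x < t}, ENNReal.ofReal (w x ^ N) ∂ρ)
        ≤ 2 * ENNReal.ofReal (1 / (N - 1)) * W := by
    simp_rw [mul_add]
    rw [lintegral_add_left (by fun_prop), lintegral_mul_const _ (by fun_prop), h_const, mul_assoc,
      two_mul]
    gcongr
  refine (setLIntegral_mono' measurableSet_Ioi h_level).trans ?_
  rw [lintegral_add_left (h_anti.measurable.const_mul a), lintegral_const_mul _ h_anti.measurable,
    lintegral_const_mul _ (by fun_prop), add_mul, mul_assoc b]
  gcongr

lemma lintegral_ofReal_le_of_measure_ge_le [SFinite ρ] (hw : Measurable w)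
    (hw_nonneg : ∀ x, 0 ≤ w x) (hv : Measurable v) (hv_nonneg : ∀ y, 0 ≤ v y) (hN : 1 < N)
    (hC : 0 < C) {a b : ℝ≥0∞}
    (hσ : σ Set.univ ≤ ENNReal.ofReal C * ∫⁻ x, ENNReal.ofReal (w x) ∂ρ)
    (h_level : ∀ t > C⁻¹, σ {y | t ≤ v y} ≤ a * ρ {x | t ≤ w x} +
      b * (ENNReal.ofReal (t ^ (-N)) *
        (ENNReal.ofReal (C ^ (1 - N)) * ∫⁻ x, ENNReal.ofReal (w x) ∂ρ +
          ∫⁻ x in {x | w x < t}, ENNReal.ofReal (w x ^ N) ∂ρ))) :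
    ∫⁻ y, ENNReal.ofReal (v y) ∂σ
      ≤ (1 + (a + b * (2 * ENNReal.ofReal (1 / (N - 1))))) * ∫⁻ x, ENNReal.ofReal (w x) ∂ρ := by
  rw [lintegral_eq_lintegral_meas_le σ (.of_forall hv_nonneg) hv.aemeasurable,
    ← Set.Ioc_union_Ioi_eq_Ioi (inv_pos.2 hC).le,
    lintegral_union measurableSet_Ioi (Set.Ioc_disjoint_Ioi le_rfl), add_mul, one_mul]
  exact add_le_add (setLIntegral_Ioc_measure_ge_le hC hσ)
    (setLIntegral_Ioi_measure_ge_le hw hw_nonneg hN hC h_level)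

end LevelIntegrals

section EnormPowMeasure

variable {X E : Type*} [MeasurableSpace X] [NormedAddCommGroup E] {μ : Measure X} {q : ℝ}
  {f g : X → E}

/-- The measure `‖f‖ ^ q μ`, whose integrals are the weighted `L^q` integrals of `f`. For
`f ∈ L^q(μ)` it is finite whatever `μ` is, so that Tonelli's theorem applies to it. -/
noncomputable def enormPowMeasure (q : ℝ) (f : X → E) (μ : Measure X) : Measure X :=
  μ.withDensity fun x ↦ ‖f x‖ₑ ^ q

lemma lintegral_enormPowMeasure (hf : AEStronglyMeasurable f μ) {u : X → ℝ≥0∞}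
    (hu : Measurable u) :
    ∫⁻ x, u x ∂enormPowMeasure q f μ = ∫⁻ x, ‖f x‖ₑ ^ q * u x ∂μ :=
  lintegral_withDensity_eq_lintegral_mul₀ (hf.enorm.pow_const q) hu.aemeasurable

lemma enormPowMeasure_univ :
    enormPowMeasure q f μ Set.univ = ∫⁻ x, ‖f x‖ₑ ^ q ∂μ := by
  rw [enormPowMeasure, withDensity_apply _ .univ, Measure.restrict_univ]

lemma enormPowMeasure_congr_ae (h : f =ᵐ[μ] g) : enormPowMeasure q f μ = enormPowMeasure q g μ :=
  withDensity_congr_ae <| h.mono fun _ hx ↦ congrArg (‖·‖ₑ ^ q) hx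

lemma enormPowMeasure_indicator (hq : 0 < q) {s : Set X} (hs : MeasurableSet s) :
    enormPowMeasure q (s.indicator f) μ = (enormPowMeasure q f μ).restrict s := by
  rw [enormPowMeasure, enormPowMeasure, restrict_withDensity hs, ← withDensity_indicator hs]
  congr 1 with x
  by_cases hx : x ∈ s <;> simp [hx, hq]

lemma enormPowMeasure_add_le (hf : AEStronglyMeasurable f μ) (hq : 1 ≤ q) :
    enormPowMeasure q (f + g) μ
      ≤ (2 : ℝ≥0∞) ^ (q - 1) • (enormPowMeasure q f μ + enormPowMeasure q g μ) := by
  have h_top : (2 : ℝ≥0∞) ^ (q - 1) ≠ ⊤ := rpow_ne_top_of_nonneg (sub_nonneg.2 hq) ofNat_ne_top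
  refine Measure.le_iff.2 fun s hs ↦ ?_
  simp only [enormPowMeasure, Measure.smul_apply, Measure.add_apply, smul_eq_mul,
    withDensity_apply _ hs]
  rw [← lintegral_add_left' (hf.restrict.enorm.pow_const q), ← lintegral_const_mul' _ _ h_top]
  gcongr with x
  exact (rpow_le_rpow (enorm_add_le _ _) (by linarith)).trans
    (rpow_add_le_mul_rpow_add_rpow _ _ hq)

end EnormPowMeasure

section Lp

variable {X Y E F 𝕜 : Type*} [MeasurableSpace X] [MeasurableSpace Y] [NormedAddCommGroup E]
  [NormedAddCommGroup F] {μ : Measure X} {ν : Measure Y} {p : ℝ≥0∞}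

lemma enormPowMeasure_univ_eq_enorm_rpow (hp_zero : p ≠ 0) (hp_top : p ≠ ⊤) (f : Lp E p μ) :
    enormPowMeasure p.toReal f μ Set.univ = ‖f‖ₑ ^ p.toReal := by
  rw [enormPowMeasure_univ, Lp.enorm_def,
    lintegral_rpow_enorm_eq_rpow_eLpNorm' (toReal_pos hp_zero hp_top),
    eLpNorm_eq_eLpNorm' hp_zero hp_top]

lemma isFiniteMeasure_enormPowMeasure (hp_zero : p ≠ 0) (hp_top : p ≠ ⊤) (f : Lp E p μ) :
    IsFiniteMeasure (enormPowMeasure p.toReal f μ) where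
  measure_univ_lt_top := by
    rw [enormPowMeasure_univ_eq_enorm_rpow hp_zero hp_top]
    exact rpow_lt_top_of_nonneg toReal_nonneg enorm_ne_top

lemma exists_add_eq_enormPowMeasure_restrict (hp_zero : p ≠ 0) (hp_top : p ≠ ⊤) (f : Lp E p μ)
    {s : Set X} (hs : MeasurableSet s) :
    ∃ g h : Lp E p μ, g + h = f ∧
      enormPowMeasure p.toReal g μ = (enormPowMeasure p.toReal f μ).restrict s ∧
      enormPowMeasure p.toReal h μ = (enormPowMeasure p.toReal f μ).restrict sᶜ := by
  have h_restrict {s : Set X} (hs : MeasurableSet s) :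
      enormPowMeasure p.toReal (((Lp.memLp f).indicator hs).toLp _) μ
        = (enormPowMeasure p.toReal f μ).restrict s := by
    rw [enormPowMeasure_congr_ae (MemLp.coeFn_toLp _),
      enormPowMeasure_indicator (toReal_pos hp_zero hp_top) hs]
  refine ⟨_, _, ?_, h_restrict hs, h_restrict hs.compl⟩
  rw [← MemLp.toLp_add]
  refine Lp.ext ((MemLp.coeFn_toLp _).trans ?_)
  rw [Set.indicator_self_add_compl]

variable [Fact (1 ≤ p)]

lemma enormPowMeasure_Lp_add_le (hp_top : p ≠ ⊤) (f g : Lp E p μ) :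
    enormPowMeasure p.toReal (f + g : Lp E p μ) μ
      ≤ (2 : ℝ≥0∞) ^ (p.toReal - 1) •
        (enormPowMeasure p.toReal f μ + enormPowMeasure p.toReal g μ) := by
  have hp_one : 1 ≤ p.toReal := (ENNReal.dichotomy p).resolve_left hp_top
  rw [enormPowMeasure_congr_ae (Lp.coeFn_add f g)]
  exact enormPowMeasure_add_le (Lp.aestronglyMeasurable f) hp_one

variable [NontriviallyNormedField 𝕜] [NormedSpace 𝕜 E] [NormedSpace 𝕜 F]

lemma enormPowMeasure_clm_apply_univ_le (hp_top : p ≠ ⊤) (T : Lp E p μ →L[𝕜] Lp F p ν)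
    (f : Lp E p μ) :
    enormPowMeasure p.toReal (T f) ν Set.univ
      ≤ ‖T‖ₑ ^ p.toReal * enormPowMeasure p.toReal f μ Set.univ := by
  have hp_zero : p ≠ 0 := (zero_lt_one.trans_le Fact.out).ne'
  rw [enormPowMeasure_univ_eq_enorm_rpow hp_zero hp_top,
    enormPowMeasure_univ_eq_enorm_rpow hp_zero hp_top, ← mul_rpow_of_nonneg _ _ toReal_nonneg]
  exact rpow_le_rpow (T.le_opENorm f) toReal_nonneg

lemma enormPowMeasure_clm_apply_ge_le (hp_top : p ≠ ⊤) {w : X → ℝ} (hw : Measurable w)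
    {v : Y → ℝ} (hv : Measurable v) {N : ℝ} (hN : 0 ≤ N) (T : Lp E p μ →L[𝕜] Lp F p ν)
    {B D : ℝ≥0∞}
    (hT : ∀ f : Lp E p μ,
      ∫⁻ x, ENNReal.ofReal (w x) ∂enormPowMeasure p.toReal f μ < ⊤ →
      ∫⁻ x, ENNReal.ofReal (w x ^ N) ∂enormPowMeasure p.toReal f μ < ⊤ →
      ∫⁻ y, ENNReal.ofReal (v y ^ N) ∂enormPowMeasure p.toReal (T f) ν
        ≤ B * (D * ∫⁻ x, ENNReal.ofReal (w x) ∂enormPowMeasure p.toReal f μ +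
          ∫⁻ x, ENNReal.ofReal (w x ^ N) ∂enormPowMeasure p.toReal f μ))
    (f : Lp E p μ) (hf : ∫⁻ x, ENNReal.ofReal (w x) ∂enormPowMeasure p.toReal f μ < ⊤)
    (hfN : ∫⁻ x, ENNReal.ofReal (w x ^ N) ∂enormPowMeasure p.toReal f μ < ⊤)
    {t : ℝ} (ht : 0 < t) :
    enormPowMeasure p.toReal (T f) ν {y | t ≤ v y}
      ≤ 2 ^ (p.toReal - 1) * ‖T‖ₑ ^ p.toReal * enormPowMeasure p.toReal f μ {x | t ≤ w x} +
        2 ^ (p.toReal - 1) * B * (ENNReal.ofReal (t ^ (-N)) *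
          (D * ∫⁻ x, ENNReal.ofReal (w x) ∂enormPowMeasure p.toReal f μ +
            ∫⁻ x in {x | w x < t}, ENNReal.ofReal (w x ^ N) ∂enormPowMeasure p.toReal f μ)) := by
  have hp_zero : p ≠ 0 := (zero_lt_one.trans_le Fact.out).ne'
  have hs : MeasurableSet {x | t ≤ w x} := measurableSet_le measurable_const hw
  obtain ⟨h, g, rfl, h_high, h_low⟩ := exists_add_eq_enormPowMeasure_restrict hp_zero hp_top f hs
  set ρ := enormPowMeasure p.toReal (h + g : Lp E p μ) μ
  have h_compl : {x | t ≤ w x}ᶜ = {x | w x < t} := by ext; simp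
  rw [h_compl] at h_low
  have h_high_le : enormPowMeasure p.toReal (T h) ν {y | t ≤ v y}
      ≤ ‖T‖ₑ ^ p.toReal * ρ {x | t ≤ w x} := by
    simpa only [h_high, Measure.restrict_apply_univ] using
      (measure_mono (Set.subset_univ _)).trans (enormPowMeasure_clm_apply_univ_le hp_top T h)
  have h_low_weighted : ∫⁻ y, ENNReal.ofReal (v y ^ N) ∂enormPowMeasure p.toReal (T g) ν
      ≤ B * (D * ∫⁻ x, ENNReal.ofReal (w x) ∂ρ +
        ∫⁻ x in {x | w x < t}, ENNReal.ofReal (w x ^ N) ∂ρ) := by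
    have hTg := hT g
    rw [h_low] at hTg
    refine (hTg ((setLIntegral_le_lintegral _ _).trans_lt hf)
      ((setLIntegral_le_lintegral _ _).trans_lt hfN)).trans ?_
    gcongr
    exact Measure.restrict_le_self
  have h_low_le : enormPowMeasure p.toReal (T g) ν {y | t ≤ v y} ≤ ENNReal.ofReal (t ^ (-N)) *
      (B * (D * ∫⁻ x, ENNReal.ofReal (w x) ∂ρ +
        ∫⁻ x in {x | w x < t}, ENNReal.ofReal (w x ^ N) ∂ρ)) :=
    (measure_ge_le_rpow_neg_mul_lintegral_rpow hv hN ht).trans (by gcongr)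
  calc enormPowMeasure p.toReal (T (h + g)) ν {y | t ≤ v y}
      ≤ 2 ^ (p.toReal - 1) * (enormPowMeasure p.toReal (T h) ν {y | t ≤ v y} +
          enormPowMeasure p.toReal (T g) ν {y | t ≤ v y}) := by
        rw [map_add]
        exact enormPowMeasure_Lp_add_le hp_top _ _ _
    _ ≤ 2 ^ (p.toReal - 1) * (‖T‖ₑ ^ p.toReal * ρ {x | t ≤ w x} + ENNReal.ofReal (t ^ (-N)) *
          (B * (D * ∫⁻ x, ENNReal.ofReal (w x) ∂ρ +
            ∫⁻ x in {x | w x < t}, ENNReal.ofReal (w x ^ N) ∂ρ))) := by gcongr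
    _ = _ := by ring

lemma lintegral_enormPowMeasure_clm_apply_le (hp_top : p ≠ ⊤) {w : X → ℝ} (hw : Measurable w)
    (hw_nonneg : ∀ x, 0 ≤ w x) {v : Y → ℝ} (hv : Measurable v) (hv_nonneg : ∀ y, 0 ≤ v y)
    {N : ℝ} (hN : 1 < N) {C : ℝ} (hC : 0 < C) (T : Lp E p μ →L[𝕜] Lp F p ν)
    {B : ℝ≥0∞}
    (hTN : ∀ f : Lp E p μ,
      ∫⁻ x, ENNReal.ofReal (w x) ∂enormPowMeasure p.toReal f μ < ⊤ →
      ∫⁻ x, ENNReal.ofReal (w x ^ N) ∂enormPowMeasure p.toReal f μ < ⊤ →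
      ∫⁻ y, ENNReal.ofReal (v y ^ N) ∂enormPowMeasure p.toReal (T f) ν
        ≤ B * (ENNReal.ofReal (C ^ (1 - N)) *
            ∫⁻ x, ENNReal.ofReal (w x) ∂enormPowMeasure p.toReal f μ +
          ∫⁻ x, ENNReal.ofReal (w x ^ N) ∂enormPowMeasure p.toReal f μ))
    (f : Lp E p μ) (hf : ∫⁻ x, ENNReal.ofReal (w x) ∂enormPowMeasure p.toReal f μ < ⊤)
    (hfN : ∫⁻ x, ENNReal.ofReal (w x ^ N) ∂enormPowMeasure p.toReal f μ < ⊤)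
    (hTf : enormPowMeasure p.toReal (T f) ν Set.univ
      ≤ ENNReal.ofReal C * ∫⁻ x, ENNReal.ofReal (w x) ∂enormPowMeasure p.toReal f μ) :
    ∫⁻ y, ENNReal.ofReal (v y) ∂enormPowMeasure p.toReal (T f) ν
      ≤ (1 + 2 ^ (p.toReal - 1) * (‖T‖ₑ ^ p.toReal + 2 * B * ENNReal.ofReal (1 / (N - 1)))) *
        ∫⁻ x, ENNReal.ofReal (w x) ∂enormPowMeasure p.toReal f μ := by
  have hp_zero : p ≠ 0 := (zero_lt_one.trans_le Fact.out).ne'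
  have := isFiniteMeasure_enormPowMeasure hp_zero hp_top f
  have h_level (t : ℝ) (ht : t > C⁻¹) := enormPowMeasure_clm_apply_ge_le hp_top hw hv
    (zero_lt_one.trans hN).le T hTN f hf hfN ((inv_pos.2 hC).trans ht)
  refine (lintegral_ofReal_le_of_measure_ge_le hw hw_nonneg hv hv_nonneg hN hC hTf
    h_level).trans_eq ?_
  ring

theorem stmt12_general (hp_top : p ≠ ⊤) {N A : ℝ} (hN : 1 < N)
    {w : X → ℝ} (hw : Measurable w) (hw_nonneg : ∀ x, 0 ≤ w x)
    {v : Y → ℝ} (hv : Measurable v) (hv_nonneg : ∀ y, 0 ≤ v y) {C : ℝ} (hC : 0 < C)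
    (T : Lp E p μ →L[𝕜] Lp F p ν) (hTA : ‖T‖ ≤ A)
    (hT : ∀ f : Lp E p μ,
      ∫⁻ x, ‖f x‖ₑ ^ p.toReal * ENNReal.ofReal (w x) ∂μ < ⊤ →
      ∫⁻ x, ‖f x‖ₑ ^ p.toReal * ENNReal.ofReal (w x ^ N) ∂μ < ⊤ →
      ∫⁻ y, ‖T f y‖ₑ ^ p.toReal ∂ν
        ≤ ENNReal.ofReal C * ∫⁻ x, ‖f x‖ₑ ^ p.toReal * ENNReal.ofReal (w x) ∂μ)
    (hTN : ∀ f : Lp E p μ,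
      ∫⁻ x, ‖f x‖ₑ ^ p.toReal * ENNReal.ofReal (w x) ∂μ < ⊤ →
      ∫⁻ x, ‖f x‖ₑ ^ p.toReal * ENNReal.ofReal (w x ^ N) ∂μ < ⊤ →
      ∫⁻ y, ‖T f y‖ₑ ^ p.toReal * ENNReal.ofReal (v y ^ N) ∂ν
        ≤ ENNReal.ofReal A * (ENNReal.ofReal (C ^ (1 - N)) *
            ∫⁻ x, ‖f x‖ₑ ^ p.toReal * ENNReal.ofReal (w x) ∂μ +
          ∫⁻ x, ‖f x‖ₑ ^ p.toReal * ENNReal.ofReal (w x ^ N) ∂μ))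
    (f : Lp E p μ)
    (hf : ∫⁻ x, ‖f x‖ₑ ^ p.toReal * ENNReal.ofReal (w x) ∂μ < ⊤)
    (hfN : ∫⁻ x, ‖f x‖ₑ ^ p.toReal * ENNReal.ofReal (w x ^ N) ∂μ < ⊤) :
    ∫⁻ y, ‖T f y‖ₑ ^ p.toReal * ENNReal.ofReal (v y) ∂ν
      ≤ ENNReal.ofReal (1 + 2 ^ (p.toReal - 1) * (A ^ p.toReal + 2 * A / (N - 1))) *
        ∫⁻ x, ‖f x‖ₑ ^ p.toReal * ENNReal.ofReal (w x) ∂μ := by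
  have hw_meas : Measurable fun x ↦ ENNReal.ofReal (w x) := by fun_prop
  have hwN_meas : Measurable fun x ↦ ENNReal.ofReal (w x ^ N) := by fun_prop
  have hv_meas : Measurable fun y ↦ ENNReal.ofReal (v y) := by fun_prop
  have hvN_meas : Measurable fun y ↦ ENNReal.ofReal (v y ^ N) := by fun_prop
  simp only [← lintegral_enormPowMeasure (Lp.aestronglyMeasurable _) hw_meas,
    ← lintegral_enormPowMeasure (Lp.aestronglyMeasurable _) hwN_meas,
    ← lintegral_enormPowMeasure (Lp.aestronglyMeasurable _) hv_meas,
    ← lintegral_enormPowMeasure (Lp.aestronglyMeasurable _) hvN_meas,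
    ← enormPowMeasure_univ] at hT hTN hf hfN ⊢
  have hA : 0 ≤ A := (norm_nonneg T).trans hTA
  have hT_enorm : ‖T‖ₑ ≤ ENNReal.ofReal A := by
    rw [← ofReal_norm]
    exact ofReal_le_ofReal hTA
  have := sub_pos.2 hN
  have h_const : ENNReal.ofReal (1 + 2 ^ (p.toReal - 1) * (A ^ p.toReal + 2 * A / (N - 1)))
      = 1 + 2 ^ (p.toReal - 1) * (ENNReal.ofReal A ^ p.toReal +
        2 * ENNReal.ofReal A * ENNReal.ofReal (1 / (N - 1))) := by
    rw [div_eq_mul_one_div (2 * A), ofReal_add (by positivity) (by positivity),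
      ofReal_mul (by positivity), ofReal_add (by positivity) (by positivity),
      ofReal_mul (by positivity), ofReal_mul (by positivity),
      ← ofReal_rpow_of_nonneg hA toReal_nonneg, ← ofReal_rpow_of_pos two_pos, ofReal_one,
      ofReal_ofNat]
  rw [h_const]
  refine (lintegral_enormPowMeasure_clm_apply_le hp_top hw hw_nonneg hv hv_nonneg hN hC T hTN f
    hf hfN (hT f hf hfN)).trans ?_
  gcongr

end Lp

theorem stmt12 (N A : ℝ) (hN : 1 < N) (hA : 1 ≤ A) :
    ∃ K : ℝ, 0 < K ∧
      ∀ (X : Type) [MeasurableSpace X] (μ : Measure X) [SigmaFinite μ]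
        (w : X → ℝ), Measurable w → (∀ x, 0 < w x) →
        ∀ (C : ℝ), 0 < C →
        ∀ (T : Lp ℂ 2 μ →L[ℂ] Lp ℂ 2 μ), ‖T‖ ≤ A →
        (∀ f : Lp ℂ 2 μ,
          (∫⁻ x, (‖f x‖₊ : ℝ≥0∞) ^ 2 * ENNReal.ofReal (w x) ∂μ) < ⊤ →
          (∫⁻ x, (‖f x‖₊ : ℝ≥0∞) ^ 2 * ENNReal.ofReal (w x ^ N) ∂μ) < ⊤ →
          (∫⁻ x, (‖(T f) x‖₊ : ℝ≥0∞) ^ 2 ∂μ)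
            ≤ ENNReal.ofReal C * ∫⁻ x, (‖f x‖₊ : ℝ≥0∞) ^ 2 * ENNReal.ofReal (w x) ∂μ) →
        (∀ f : Lp ℂ 2 μ,
          (∫⁻ x, (‖f x‖₊ : ℝ≥0∞) ^ 2 * ENNReal.ofReal (w x) ∂μ) < ⊤ →
          (∫⁻ x, (‖f x‖₊ : ℝ≥0∞) ^ 2 * ENNReal.ofReal (w x ^ N) ∂μ) < ⊤ →
          (∫⁻ x, (‖(T f) x‖₊ : ℝ≥0∞) ^ 2 * ENNReal.ofReal (w x ^ N) ∂μ)
            ≤ ENNReal.ofReal A *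
                (ENNReal.ofReal (C ^ (1 - N)) *
                    (∫⁻ x, (‖f x‖₊ : ℝ≥0∞) ^ 2 * ENNReal.ofReal (w x) ∂μ) +
                  ∫⁻ x, (‖f x‖₊ : ℝ≥0∞) ^ 2 * ENNReal.ofReal (w x ^ N) ∂μ)) →
        ∀ f : Lp ℂ 2 μ,
          (∫⁻ x, (‖f x‖₊ : ℝ≥0∞) ^ 2 * ENNReal.ofReal (w x) ∂μ) < ⊤ →
          (∫⁻ x, (‖f x‖₊ : ℝ≥0∞) ^ 2 * ENNReal.ofReal (w x ^ N) ∂μ) < ⊤ →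
          (∫⁻ x, (‖(T f) x‖₊ : ℝ≥0∞) ^ 2 * ENNReal.ofReal (w x) ∂μ)
            ≤ ENNReal.ofReal K * ∫⁻ x, (‖f x‖₊ : ℝ≥0∞) ^ 2 * ENNReal.ofReal (w x) ∂μ := by
  have := sub_pos.2 hN
  refine ⟨1 + 2 * (A ^ 2 + 2 * A / (N - 1)), by positivity, fun X _ μ _ w hw hw_pos C hC T hTA ↦ ?_⟩
  have h_nonneg x := (hw_pos x).le
  simpa [enorm_eq_nnnorm, show (2 : ℝ) - 1 = 1 by norm_num] using
    stmt12_general (p := 2) ofNat_ne_top hN hw h_nonneg hw h_nonneg hC T hTA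
end
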